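/- arXiv:2007.14115 — 2 statements merged into one kernel-verified Lean document; each statement's English description precedes it below -/
import Mathlib

section
/- Let s, t, α be positive integers with 2 ≤ α, α < s and α < t, let G be a finite abelian group with line set 𝓛 making (G,𝓛) a proper partial geometry pg(s,t,α) admitting G as an abelian Singer group with the pair of rigid type (axioms (i)–(vi) of the encoding), and assume s > 2α − 1. Then every prime divisor of Δ = (s + t − α + 1)² (equivalently, every prime divisor of s + t − α + 1) divides s + 1. -/
/-- Encoding of a partial geometry `pg(s,t,α)` whose point set is the abelian group `G`,
admitting `G` (acting by translation) as an abelian Singer group; the lines are the finite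
subsets of `G` collected in `𝓛`.  Axioms (i)–(v). -/
structure IsPGSinger (G : Type*) [CommGroup G] [DecidableEq G]
    (𝓛 : Set (Finset G)) (s t α : ℕ) : Prop where
  /-- (i) every line has exactly `s+1` points -/
  line_card : ∀ L ∈ 𝓛, L.card = s + 1
  /-- (ii) every point lies on exactly `t+1` lines -/
  point_deg : ∀ x : G, {L | L ∈ 𝓛 ∧ x ∈ L}.ncard = t + 1
  /-- (iii) two distinct lines share at most one point -/
  line_inter : ∀ L ∈ 𝓛, ∀ M ∈ 𝓛, L ≠ M → ((L : Set G) ∩ (M : Set G)).ncard ≤ 1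
  /-- (iv) for a non-incident point–line pair `(x,L)`, exactly `α` lines through `x` meet `L` -/
  alpha_ax : ∀ x : G, ∀ L ∈ 𝓛, x ∉ L →
    {M | M ∈ 𝓛 ∧ x ∈ M ∧ ∃ y ∈ L, y ∈ M}.ncard = α
  /-- (v) the line set is closed under translation by elements of `G` -/
  translate : ∀ g : G, ∀ L ∈ 𝓛, L.image (fun y => g * y) ∈ 𝓛

/-- (vi) The pair `(S,G)` is of rigid type: every line has trivial stabilizer in `G`. -/
def RigidType (G : Type*) [CommGroup G] [DecidableEq G] (𝓛 : Set (Finset G)) : Prop :=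
  ∀ g : G, ∀ L ∈ 𝓛, L.image (fun y => g * y) = L → g = 1

namespace RigidPG

open Finset

section alg
variable {G : Type*} [AddCommGroup G] [Fintype G]

/-- group-algebra element of a function -/
noncomputable def toA {R : Type*} [CommRing R] (f : G → R) : AddMonoidAlgebra R G :=
  ∑ g, AddMonoidAlgebra.single g (f g)

lemma toA_coeff {R : Type*} [CommRing R] (f : G → R) (x : G) : (toA f).coeff x = f x := by
  classical
  simp [toA, AddMonoidAlgebra.coeff_sum, Finsupp.finsetSum_apply, Finsupp.single_apply]

lemma toA_mul {R : Type*} [CommRing R] (f h : G → R) :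
    toA f * toA h = toA (fun z => ∑ y, f y * h (z - y)) := by
  unfold toA
  simp_rw [Finset.sum_mul, Finset.mul_sum, AddMonoidAlgebra.single_mul_single]
  have : ∀ z : G, AddMonoidAlgebra.single z (∑ y, f y * h (z - y)) =
      ∑ y, AddMonoidAlgebra.single z (f y * h (z - y)) := by
    intro z
    exact map_sum (AddMonoidAlgebra.singleAddHom (R := R) z) _ _
  simp_rw [this]
  rw [Finset.sum_comm (f := fun z y => AddMonoidAlgebra.single z (f y * h (z - y)))]
  refine Finset.sum_congr rfl fun y _ => ?_
  refine Fintype.sum_equiv (Equiv.addLeft y) _ _ fun z => ?_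
  simp

lemma toA_pow (p : ℕ) [Fact p.Prime] (f : G → ZMod p) (j : ℕ) :
    toA f ^ p ^ j = ∑ g, AddMonoidAlgebra.single (p ^ j • g) (f g) := by
  have : CharP (AddMonoidAlgebra (ZMod p) G) p := by
    refine charP_of_injective_algebraMap (R := ZMod p) (A := AddMonoidAlgebra (ZMod p) G) ?_ p
    exact FaithfulSMul.algebraMap_injective _ _
  unfold toA
  rw [sum_pow_char_pow p]
  refine Finset.sum_congr rfl fun g _ => ?_
  rw [AddMonoidAlgebra.single_pow, ZMod.pow_card_pow]

/-- reduction mod `p` of a convolution identity -/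
lemma conv_cast (p : ℕ) (f h : G → ℤ) :
    toA (fun g => (f g : ZMod p)) * toA (fun g => (h g : ZMod p)) =
      toA (fun z => ((∑ y, f y * h (z - y) : ℤ) : ZMod p)) := by
  rw [toA_mul]; congr 1; funext z; push_cast; rfl

/-- Lemma U -/
lemma lemU (p a : ℕ) [Fact p.Prime] (hc : Fintype.card G = p ^ a) (l X : G → ℤ)
    (hl : ¬ (p : ℤ) ∣ ∑ g, l g) (hX : ∀ z, ∑ y, X y * l (z - y) = 0) : ∀ g, X g = 0 := by
  have key : ∀ X : G → ℤ, (∀ z, ∑ y, X y * l (z - y) = 0) → ∀ g, (p : ℤ) ∣ X g := by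
    intro X hX g
    have h1 := conv_cast p X l
    have h2 : toA (fun g => (X g : ZMod p)) * toA (fun g => (l g : ZMod p)) = 0 := by
      rw [h1]; simp [hX, toA]
    have h3 : toA (fun g => (l g : ZMod p)) ^ p ^ a =
        AddMonoidAlgebra.single 0 ((∑ g, l g : ℤ) : ZMod p) := by
      rw [toA_pow]
      have : ∀ g : G, p ^ a • g = 0 := fun g => by rw [← hc]; exact card_nsmul_eq_zero
      simp_rw [this]
      push_cast
      exact (map_sum (AddMonoidAlgebra.singleAddHom (R := ZMod p) (0 : G)) _ _).symm
    have h4 : toA (fun g => (X g : ZMod p)) * toA (fun g => (l g : ZMod p)) ^ p ^ a = 0 := by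
      have : p ^ a ≠ 0 := pow_ne_zero _ (Fact.out : p.Prime).ne_zero
      obtain ⟨k, hk⟩ := Nat.exists_eq_succ_of_ne_zero this
      rw [hk, pow_succ', ← mul_assoc, h2, zero_mul]
    rw [h3] at h4
    have h5 := congrArg (fun x => x.coeff g) h4
    simp only [AddMonoidAlgebra.coeff_mul_single_zero, toA_coeff, AddMonoidAlgebra.coeff_zero,
      Finsupp.coe_zero, Pi.zero_apply] at h5
    rcases mul_eq_zero.1 h5 with h | h
    · exact (ZMod.intCast_zmod_eq_zero_iff_dvd _ _).1 h
    · exact absurd ((ZMod.intCast_zmod_eq_zero_iff_dvd _ _).1 h) hl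
  have key2 : ∀ N : ℕ, ∀ X : G → ℤ, (∀ z, ∑ y, X y * l (z - y) = 0) →
      ∀ g, (p : ℤ) ^ N ∣ X g := by
    intro N
    induction N with
    | zero => intro X _ g; simp
    | succ N ih =>
      intro X hX g
      choose Y hY using key X hX
      have hp : (p : ℤ) ≠ 0 := by exact_mod_cast (Fact.out : p.Prime).ne_zero
      have : ∀ z, ∑ y, Y y * l (z - y) = 0 := by
        intro z
        have := hX z
        simp_rw [hY, mul_assoc, ← Finset.mul_sum] at this
        exact (mul_eq_zero.1 this).resolve_left hp
      rw [hY g, pow_succ']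
      exact mul_dvd_mul_left _ (ih Y this g)
  intro g
  by_contra hne
  have hp1 : 1 < p := (Fact.out : p.Prime).one_lt
  have h := key2 (X g).natAbs X hX g
  have h2 := Int.natAbs_dvd_natAbs.2 h
  rw [Int.natAbs_pow, Int.natAbs_natCast] at h2
  have h3 := Nat.le_of_dvd (Int.natAbs_pos.2 hne) h2
  exact absurd h3 (not_le.2 (Nat.lt_pow_self hp1))

/-- Lemma R -/
lemma lemR (p : ℕ) [Fact p.Prime] (hc : ¬ p ∣ Fintype.card G) (f : ℕ) :
    ∀ (X : G → ℤ) (N : ℤ), (∀ z, ∑ y, X y * X (z - y) = N * X z) → (p : ℤ) ^ f ∣ N →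
    ∀ g, (p : ℤ) ^ f ∣ X g := by
  have hpp : p.Prime := Fact.out
  have key : ∀ (X : G → ℤ) (N : ℤ), (∀ z, ∑ y, X y * X (z - y) = N * X z) → (p : ℤ) ∣ N →
      ∀ g, (p : ℤ) ∣ X g := by
    intro X N hX hN g
    have h2 : toA (fun g => (X g : ZMod p)) * toA (fun g => (X g : ZMod p)) = 0 := by
      rw [conv_cast p X X]
      have : ((N : ℤ) : ZMod p) = 0 := (ZMod.intCast_zmod_eq_zero_iff_dvd _ _).2 hN
      simp [hX, toA, this]
    have hcop : Nat.Coprime p (Fintype.card G) := (Nat.Prime.coprime_iff_not_dvd hpp).2 hc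
    have hj : p ^ (Fintype.card G).totient ≡ 1 [MOD Fintype.card G] :=
      Nat.ModEq.pow_totient hcop
    set j := (Fintype.card G).totient with hjdef
    have hjpos : 0 < j := Nat.totient_pos.2 Fintype.card_pos
    have h3 : toA (fun g => (X g : ZMod p)) ^ p ^ j = toA (fun g => (X g : ZMod p)) := by
      rw [toA_pow]
      unfold toA
      refine Finset.sum_congr rfl fun g _ => ?_
      have : p ^ j • g = g := by
        have h := (nsmul_eq_nsmul_iff_modEq (x := g) (n := p ^ j) (m := 1)).2
          (hj.of_dvd (addOrderOf_dvd_card))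
        simpa using h
      rw [this]
    have h4 : toA (fun g => (X g : ZMod p)) = 0 := by
      have h2p : 2 ≤ p ^ j := le_trans hpp.two_le (Nat.le_self_pow hjpos.ne' p)
      obtain ⟨k, hk⟩ := Nat.exists_eq_add_of_le h2p
      rw [← h3, hk, pow_add, pow_two, h2, zero_mul]
    have h5 := congrArg (fun x => x.coeff g) h4
    simp only [toA_coeff, AddMonoidAlgebra.coeff_zero, Finsupp.coe_zero, Pi.zero_apply] at h5
    exact (ZMod.intCast_zmod_eq_zero_iff_dvd _ _).1 h5
  have hp : (p : ℤ) ≠ 0 := by exact_mod_cast hpp.ne_zero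
  induction f with
  | zero => intro X N _ _ g; simp
  | succ f ih =>
    intro X N hX hN g
    choose Y hY using key X N hX (dvd_trans (dvd_pow_self _ (Nat.succ_ne_zero f)) hN)
    obtain ⟨M, hM⟩ := hN
    have : ∀ z, ∑ y, Y y * Y (z - y) = ((p : ℤ) ^ f * M) * Y z := by
      intro z
      have := hX z
      simp_rw [hY] at this
      have e : ∑ y, (p : ℤ) * Y y * ((p : ℤ) * Y (z - y)) = p * (p * ∑ y, Y y * Y (z - y)) := by
        rw [Finset.mul_sum, Finset.mul_sum]
        exact Finset.sum_congr rfl fun y _ => by ring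
      rw [e, hM] at this
      have h2 : (p : ℤ) * (p * ∑ y, Y y * Y (z - y)) = p * (p * ((p : ℤ) ^ f * M * Y z)) := by
        rw [this]; ring
      exact mul_left_cancel₀ hp (mul_left_cancel₀ hp h2)
    rw [hY g, pow_succ']
    exact mul_dvd_mul_left _ (ih Y _ this (dvd_mul_right _ _) g)

end alg


section core
variable {A B : Type*} [AddCommGroup A] [Fintype A] [AddCommGroup B] [Fintype B]

lemma proj_fst (f h : A × B → ℤ) (x : A) :
    ∑ b, ∑ y, f y * h ((x, b) - y) =
      ∑ a, (∑ b, f (a, b)) * (∑ b, h (x - a, b)) := by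
  rw [Finset.sum_comm, Fintype.sum_prod_type]
  refine Finset.sum_congr rfl fun a _ => ?_
  rw [Finset.sum_mul]
  refine Finset.sum_congr rfl fun b _ => ?_
  rw [← Finset.mul_sum]
  congr 1
  exact Fintype.sum_equiv (Equiv.subRight b) _ _ fun c => by simp

lemma proj_snd (f h : A × B → ℤ) (x : B) :
    ∑ a, ∑ y, f y * h ((a, x) - y) =
      ∑ b, (∑ a, f (a, b)) * (∑ a, h (a, x - b)) := by
  rw [Finset.sum_comm, Fintype.sum_prod_type_right]
  refine Finset.sum_congr rfl fun a _ => ?_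
  rw [Finset.sum_mul]
  refine Finset.sum_congr rfl fun b _ => ?_
  rw [← Finset.mul_sum]
  congr 1
  exact Fintype.sum_equiv (Equiv.subRight b) _ _ fun c => by simp

lemma sum_sub_left' {G : Type*} [AddCommGroup G] [Fintype G] (f : G → ℤ) (z : G) :
    ∑ y, f (z - y) = ∑ y, f y :=
  Fintype.sum_equiv (Equiv.subLeft z) _ _ fun _ => rfl

/-- S1 -/
lemma stepP (p a : ℕ) [Fact p.Prime] (hA : Fintype.card A = p ^ a)
    (s t α n : ℤ) (hn : n = s + t + 1 - α) (E L : A × B → ℤ)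
    (hEsum : ∑ g, E g = (t + 1) * (s + 1))
    (hEL : ∀ z, ∑ y, E y * L (z - y) = n * L z + α)
    (hLsum : ∑ g, L g = s + 1)
    (hv : α * ((Fintype.card A : ℤ) * Fintype.card B) = (s + 1) * (s * t + α))
    (hp : ¬ (p : ℤ) ∣ s + 1) :
    (Fintype.card A : ℤ) * (∑ b, E (0, b) - n) = s * t + α := by
  classical
  set X : A → ℤ := fun x => (Fintype.card A : ℤ) * ((∑ b, E (x, b)) - if x = 0 then n else 0)
      - (s * t + α) with hX
  set l : A → ℤ := fun x => ∑ b, L (x, b) with hl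
  have hls : ∑ x, l x = s + 1 := by rw [← hLsum, Fintype.sum_prod_type]
  have h0 : ∀ z, ∑ y, X y * l (z - y) = 0 := by
    intro z
    have h1 := proj_fst E L z
    simp_rw [hEL] at h1
    have h2 : ∑ y, X y * l (z - y) =
        (Fintype.card A : ℤ) * (∑ y, (∑ b, E (y, b)) * l (z - y))
        - (Fintype.card A : ℤ) * (∑ y, (if y = 0 then n else 0) * l (z - y))
        - (s * t + α) * ∑ y, l (z - y) := by
      rw [Finset.mul_sum, Finset.mul_sum, Finset.mul_sum, ← Finset.sum_sub_distrib,
        ← Finset.sum_sub_distrib]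
      exact Finset.sum_congr rfl fun y _ => by simp only [hX]; ring
    have h3 : ∑ y, (if y = 0 then n else 0) * l (z - y) = n * l z := by
      simp
    rw [h2, h3, ← h1, sum_sub_left', hls, Finset.sum_add_distrib, ← Finset.mul_sum]
    simp only [Finset.sum_const, Finset.card_univ, nsmul_eq_mul, hl]
    linear_combination hv
  have h1 := lemU p a hA l X (by rw [hls]; exact hp) h0 0
  simp only [hX, if_true] at h1
  linarith

/-- S2 -/
lemma stepB (p f : ℕ) [Fact p.Prime] (hB : ¬ p ∣ Fintype.card B)
    (s t α n : ℤ) (hn : n = s + t + 1 - α) (E : A × B → ℤ)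
    (hE0 : E 0 = t + 1) (ht : 0 ≤ t)
    (hE01 : ∀ g, g ≠ 0 → E g = 0 ∨ E g = 1)
    (hEneg : ∀ g, E (-g) = E g)
    (hEsum : ∑ g, E g = (t + 1) * (s + 1))
    (hEE : ∀ z, ∑ y, E y * E (z - y) = n * E z + α * (t + 1))
    (hv : α * ((Fintype.card A : ℤ) * Fintype.card B) = (s + 1) * (s * t + α))
    (hqn : (p : ℤ) ^ f ∣ n) :
    (∀ b, (p : ℤ) ^ f ∣ (Fintype.card B : ℤ) * (∑ a, E (a, b)) - (t + 1) * (s + 1)) ∧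
    ((p : ℤ) ^ f ∣ (t + 1) * (s + 1) →
    ∃ F : ℤ, t + 1 ≤ F ∧
      (p : ℤ) ^ f * ((t + 1) * (s + 1) - F) ≤
        n * F + α * (t + 1) * Fintype.card A - F ^ 2) := by
  classical
  have hpp : p.Prime := Fact.out
  set φ : B → ℤ := fun b => ∑ a, E (a, b) with hφ
  have hφs : ∑ b, φ b = (t + 1) * (s + 1) := by rw [← hEsum, Fintype.sum_prod_type_right]
  have hφφ : ∀ z, ∑ y, φ y * φ (z - y) = n * φ z + α * (t + 1) * Fintype.card A := by
    intro z
    have h1 := proj_snd E E z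
    simp_rw [hEE] at h1
    rw [← h1, Finset.sum_add_distrib, ← Finset.mul_sum]
    simp only [Finset.sum_const, Finset.card_univ, nsmul_eq_mul, hφ]
    ring
  set k := (t + 1) * (s + 1) with hk
  have hkn : k - n = s * t + α := by rw [hk, hn]; ring
  have hdiv : ∀ b, (p : ℤ) ^ f ∣ (Fintype.card B : ℤ) * φ b - k := by
    refine lemR p hB f (fun b => (Fintype.card B : ℤ) * φ b - k) (n * Fintype.card B) ?_
      (Dvd.dvd.mul_right hqn _)
    intro z
    have h2 : ∑ y, ((Fintype.card B : ℤ) * φ y - k) * ((Fintype.card B : ℤ) * φ (z - y) - k) =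
        (Fintype.card B : ℤ) ^ 2 * (∑ y, φ y * φ (z - y))
        - k * Fintype.card B * (∑ y, φ y) - k * Fintype.card B * (∑ y, φ (z - y))
        + ∑ y : B, k ^ 2 := by
      rw [Finset.mul_sum, Finset.mul_sum, Finset.mul_sum, ← Finset.sum_sub_distrib,
        ← Finset.sum_sub_distrib, ← Finset.sum_add_distrib]
      exact Finset.sum_congr rfl fun y _ => by ring
    rw [h2, sum_sub_left', hφs, hφφ]
    simp only [Finset.sum_const, Finset.card_univ, nsmul_eq_mul]
    rw [← hkn] at hv
    have hk' := hk
    linear_combination (Fintype.card B : ℤ) * (t + 1) * hv - (Fintype.card B : ℤ) * (k - n) * hk'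
  refine ⟨hdiv, fun hqk => ?_⟩
  have hdiv2 : ∀ b, (p : ℤ) ^ f ∣ φ b := by
    intro b
    have h1 : (p : ℤ) ^ f ∣ (Fintype.card B : ℤ) * φ b := by
      have := dvd_add (hdiv b) hqk
      simpa using this
    refine IsCoprime.dvd_of_dvd_mul_left ?_ h1
    refine IsCoprime.pow_left ?_
    exact Nat.isCoprime_iff_coprime.2 ((Nat.Prime.coprime_iff_not_dvd hpp).2 hB)
  have hE_nonneg : ∀ g, 0 ≤ E g := by
    intro g
    by_cases hg : g = 0
    · rw [hg, hE0]; linarith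
    · rcases hE01 g hg with h | h <;> rw [h] <;> norm_num
  have hφ_nonneg : ∀ b, 0 ≤ φ b := fun b => Finset.sum_nonneg fun a _ => hE_nonneg _
  have hφneg : ∀ b, φ (-b) = φ b := by
    intro b
    refine Fintype.sum_equiv (Equiv.neg A) _ _ fun a => ?_
    rw [← hEneg]; simp
  refine ⟨φ 0, ?_, ?_⟩
  · rw [← hE0]
    exact Finset.single_le_sum (f := fun a => E (a, 0)) (fun a _ => hE_nonneg _) (Finset.mem_univ 0)
  · have h1 : ∑ y, φ y ^ 2 = n * φ 0 + α * (t + 1) * Fintype.card A := by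
      rw [← hφφ 0]
      refine Finset.sum_congr rfl fun y _ => ?_
      rw [zero_sub, hφneg]; ring
    have h2 : ∀ b, (p : ℤ) ^ f * φ b ≤ φ b ^ 2 := by
      intro b
      rcases (hφ_nonneg b).eq_or_lt with h | h
      · rw [← h]; simp
      · have := Int.le_of_dvd h (hdiv2 b)
        nlinarith
    rw [← Finset.add_sum_erase _ _ (Finset.mem_univ (0 : B))] at h1 hφs
    have h3 : (p : ℤ) ^ f * ∑ b ∈ Finset.univ.erase 0, φ b ≤
        ∑ b ∈ Finset.univ.erase 0, φ b ^ 2 := by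
      rw [Finset.mul_sum]
      exact Finset.sum_le_sum fun b _ => h2 b
    have h4 : ∑ b ∈ Finset.univ.erase 0, φ b = k - φ 0 := by linarith
    rw [h4] at h3
    linarith


lemma addChar_isIntegral (χ : AddChar B ℂ) (b : B) : IsIntegral ℤ (χ b) := by
  refine IsIntegral.of_pow (n := Fintype.card B) Fintype.card_pos ?_
  rw [← AddChar.map_nsmul_eq_pow, card_nsmul_eq_zero, AddChar.map_zero_eq_one]
  exact isIntegral_one

lemma isInt_of_rat_mul (x : ℂ) (hx : IsIntegral ℤ x) (a c : ℤ) (ha : a ≠ 0) (h : (a : ℂ) * x = c) :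
    ∃ u : ℤ, (u : ℂ) = x := by
  have h1 : x = algebraMap ℚ ℂ ((c : ℚ) / a) := by
    have : (a : ℂ) ≠ 0 := by exact_mod_cast ha
    simp only [eq_ratCast]
    push_cast
    field_simp
    linear_combination h
  rw [h1] at hx
  have h2 : IsIntegral ℤ ((c : ℚ) / a) :=
    (isIntegral_algebraMap_iff (FaithfulSMul.algebraMap_injective ℚ ℂ)).1 hx
  obtain ⟨u, hu⟩ := IsIntegrallyClosed.isIntegral_iff.1 h2
  refine ⟨u, ?_⟩
  rw [h1, ← hu]
  simp

/-- character values on the product -/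
lemma char_val (n c : ℤ) (E : A × B → ℤ)
    (hEE : ∀ z, ∑ y, E y * E (z - y) = n * E z + c)
    (ψ : AddChar A ℂ) (χ : AddChar B ℂ) (hχ : χ ≠ 0) :
    (∑ g : A × B, (E g : ℂ) * (ψ g.1 * χ g.2)) = 0 ∨
    (∑ g : A × B, (E g : ℂ) * (ψ g.1 * χ g.2)) = n := by
  set w := ∑ g : A × B, (E g : ℂ) * (ψ g.1 * χ g.2) with hw
  have h0 : ∑ g : A × B, ψ g.1 * χ g.2 = 0 := by
    rw [Fintype.sum_prod_type]
    simp_rw [← Finset.mul_sum]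
    rw [AddChar.sum_eq_zero_iff_ne_zero.2 hχ]; simp
  have h1 : w * w = ∑ z : A × B, ((∑ y, E y * E (z - y) : ℤ) : ℂ) * (ψ z.1 * χ z.2) := by
    rw [hw, Finset.sum_mul]
    simp_rw [Finset.mul_sum]
    push_cast
    simp_rw [Finset.sum_mul]
    rw [Finset.sum_comm (s := (Finset.univ : Finset (A × B))) (t := Finset.univ)
      (f := fun z y => (E y : ℂ) * (E (z - y)) * (ψ z.1 * χ z.2))]
    refine Finset.sum_congr rfl fun y _ => ?_
    refine Fintype.sum_equiv (Equiv.addLeft y) _ _ fun z => ?_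
    simp [AddChar.map_add_eq_mul]
    ring
  simp_rw [hEE] at h1
  push_cast at h1
  simp_rw [add_mul, mul_assoc] at h1
  rw [Finset.sum_add_distrib, ← Finset.mul_sum, ← Finset.mul_sum, h0, ← hw, mul_zero,
    add_zero] at h1
  have h2 : w * (w - n) = 0 := by linear_combination h1
  rcases mul_eq_zero.1 h2 with h | h
  · exact Or.inl h
  · exact Or.inr (sub_eq_zero.1 h)

lemma char_avg (E : A × B → ℤ) (χ : AddChar B ℂ) :
    ∑ ψ : AddChar A ℂ, (∑ g : A × B, (E g : ℂ) * (ψ g.1 * χ g.2)) =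
      (Fintype.card A : ℂ) * ∑ b, (E (0, b) : ℂ) * χ b := by
  classical
  rw [Finset.sum_comm]
  have : ∀ g : A × B, ∑ ψ : AddChar A ℂ, (E g : ℂ) * (ψ g.1 * χ g.2) =
      (E g : ℂ) * χ g.2 * (if g.1 = 0 then (Fintype.card A : ℂ) else 0) := by
    intro g
    rw [← AddChar.sum_apply_eq_ite, Finset.mul_sum]
    exact Finset.sum_congr rfl fun ψ _ => by ring
  simp_rw [this]
  rw [Fintype.sum_prod_type_right]
  simp only [mul_ite, mul_zero, Finset.sum_ite_eq', Finset.mem_univ, if_true]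
  rw [Finset.mul_sum]
  exact Finset.sum_congr rfl fun b _ => by ring

/-- S3 -/
lemma stepC (n c q : ℤ) (hn0 : 0 < n) (hq : 0 < q) (E : A × B → ℤ)
    (hqg : q = Int.gcd n (Fintype.card A))
    (hE01 : ∀ g, g ≠ 0 → E g = 0 ∨ E g = 1)
    (hEneg : ∀ g, E (-g) = E g)
    (hEE : ∀ z, ∑ y, E y * E (z - y) = n * E z + c) (e0 T : ℤ)
    (he0 : e0 = ∑ b, E (0, b)) (hT : E 0 = T) :
    n * (Fintype.card B * (n - T) - (n - e0)) ≤
      q * (Fintype.card B * (n ^ 2 - 2 * n * T + (T ^ 2 + (e0 - T))) - (n - e0) ^ 2) := by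
  classical
  have hA0 : (Fintype.card A : ℤ) ≠ 0 := by exact_mod_cast Fintype.card_ne_zero
  -- integer values
  have hu : ∀ χ : AddChar B ℂ, ∃ u : ℤ, (u : ℂ) = n - ∑ b, (E (0, b) : ℂ) * χ b ∧
      (χ = 0 → u = n - e0) ∧ (χ ≠ 0 → n * u ≤ q * u ^ 2) := by
    intro χ
    by_cases hχ : χ = 0
    · refine ⟨n - e0, ?_, fun _ => rfl, fun h => absurd hχ h⟩
      rw [hχ, he0]; push_cast; simp
    · have hval := fun ψ : AddChar A ℂ => char_val n c E hEE ψ χ hχ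
      have havg := char_avg E χ
      set W : AddChar A ℂ → ℂ := fun ψ => ∑ g : A × B, (E g : ℂ) * (ψ g.1 * χ g.2) with hW
      set y := ∑ b, (E (0, b) : ℂ) * χ b with hy
      set z : ℕ := (Finset.univ.filter fun ψ => W ψ = 0).card with hz
      have hsum : ∑ ψ, ((n : ℂ) - W ψ) = n * z := by
        have : ∀ ψ, (n : ℂ) - W ψ = if W ψ = 0 then (n : ℂ) else 0 := by
          intro ψ
          split_ifs with h
          · rw [h, sub_zero]
          · rw [show W ψ = n from (hval ψ).resolve_left h, sub_self]
        simp_rw [this]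
        rw [← Finset.sum_filter, Finset.sum_const, nsmul_eq_mul, mul_comm]
      have h1 : ((Fintype.card A : ℤ) : ℂ) * (n - y) = ((n * z : ℤ) : ℂ) := by
        push_cast
        rw [← hsum, Finset.sum_sub_distrib, havg]
        simp only [Finset.sum_const, Finset.card_univ, nsmul_eq_mul, AddChar.card_eq]
        ring
      have hInt0 : IsIntegral ℤ ((n : ℂ) - y) := by
        refine IsIntegral.sub (isIntegral_algebraMap (R := ℤ) (A := ℂ) (x := n)) ?_
        refine IsIntegral.sum _ fun b _ => ?_
        exact IsIntegral.mul (isIntegral_algebraMap (R := ℤ) (A := ℂ) (x := E (0, b)))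
          (addChar_isIntegral χ b)
      obtain ⟨u, hu⟩ := isInt_of_rat_mul _ hInt0 _ _ hA0 h1
      refine ⟨u, hu, fun h => absurd h hχ, fun _ => ?_⟩
      rw [← hu] at h1
      have h2 : (Fintype.card A : ℤ) * u = n * z := by exact_mod_cast h1
      obtain ⟨n', hn'⟩ : q ∣ n := hqg ▸ Int.gcd_dvd_left ..
      obtain ⟨r, hr⟩ : q ∣ (Fintype.card A : ℤ) := hqg ▸ Int.gcd_dvd_right ..
      have hcop : IsCoprime n' r := by
        have h3 : (q : ℤ) = n * Int.gcdA n (Fintype.card A) +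
            Fintype.card A * Int.gcdB n (Fintype.card A) := by
          rw [hqg]; exact Int.gcd_eq_gcd_ab _ _
        refine ⟨Int.gcdA n (Fintype.card A), Int.gcdB n (Fintype.card A), ?_⟩
        apply mul_left_cancel₀ hq.ne'
        generalize Int.gcdA n (Fintype.card A) = x1 at *
        generalize Int.gcdB n (Fintype.card A) = x2 at *
        linear_combination -h3 - x1 * hn' - x2 * hr
      have h4 : r * u = n' * z := by
        apply mul_left_cancel₀ hq.ne'
        linear_combination h2 - u * hr + z * hn'
      have h5 : n' ∣ u := hcop.dvd_of_dvd_mul_left ⟨z, h4⟩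
      have hApos : (0 : ℤ) < Fintype.card A := by exact_mod_cast Fintype.card_pos
      have hu0 : 0 ≤ u := by
        have : 0 ≤ (Fintype.card A : ℤ) * u := by rw [h2]; exact mul_nonneg hn0.le (Int.natCast_nonneg z)
        exact nonneg_of_mul_nonneg_right this hApos
      rcases hu0.eq_or_lt with h | h
      · rw [← h]; simp
      · have h6 := Int.le_of_dvd h h5
        have h7 : n ≤ q * u := by rw [hn']; exact mul_le_mul_of_nonneg_left h6 hq.le
        nlinarith
  choose u hu1 hu2 hu3 using hu
  have hχsum : ∀ b : B, ∑ χ : AddChar B ℂ, χ b = if b = 0 then (Fintype.card B : ℂ) else 0 :=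
    fun b => AddChar.sum_apply_eq_ite b
  have hy1 : ∑ χ : AddChar B ℂ, ∑ b, (E (0, b) : ℂ) * χ b = Fintype.card B * T := by
    rw [Finset.sum_comm]
    simp_rw [← Finset.mul_sum, hχsum]
    simp only [mul_ite, mul_zero, Finset.sum_ite_eq', Finset.mem_univ, if_true]
    rw [← hT]; rw [mul_comm]; rfl
  have hSS : ∑ b, E (0, b) ^ 2 = T ^ 2 + (e0 - T) := by
    rw [he0, ← Finset.add_sum_erase _ _ (Finset.mem_univ (0 : B)),
      ← Finset.add_sum_erase _ (fun b => E (0, b)) (Finset.mem_univ (0 : B))]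
    have h1 : E (0, 0) = T := hT
    have h2 : ∑ b ∈ Finset.univ.erase (0 : B), E (0, b) ^ 2 =
        ∑ b ∈ Finset.univ.erase (0 : B), E (0, b) := by
      refine Finset.sum_congr rfl fun b hb => ?_
      have hb' : ((0, b) : A × B) ≠ 0 := by
        intro h
        exact (Finset.mem_erase.1 hb).1 (congrArg Prod.snd h)
      rcases hE01 _ hb' with h | h <;> rw [h] <;> norm_num
    rw [h1, h2]; ring
  have hy2 : ∑ χ : AddChar B ℂ, (∑ b, (E (0, b) : ℂ) * χ b) ^ 2 =
      Fintype.card B * ((T ^ 2 + (e0 - T) : ℤ) : ℂ) := by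
    have h1 : ∀ χ : AddChar B ℂ, (∑ b, (E (0, b) : ℂ) * χ b) ^ 2 =
        ∑ b, ∑ b', (E (0, b) : ℂ) * E (0, b') * χ (b + b') := by
      intro χ
      rw [sq, Finset.sum_mul_sum]
      refine Finset.sum_congr rfl fun b _ => Finset.sum_congr rfl fun b' _ => ?_
      rw [AddChar.map_add_eq_mul]; ring
    simp_rw [h1]
    rw [Finset.sum_comm]
    rw [← hSS]
    push_cast
    rw [Finset.mul_sum]
    refine Finset.sum_congr rfl fun b _ => ?_
    rw [Finset.sum_comm]
    simp_rw [← Finset.mul_sum, hχsum]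
    have h2 : ∀ b' : B, (b + b' = 0) = (b' = -b) := by
      intro b'; rw [add_comm, eq_neg_iff_add_eq_zero]
    simp_rw [h2]
    simp only [mul_ite, mul_zero, Finset.sum_ite_eq', Finset.mem_univ, if_true]
    have h3 : E (0, -b) = E (0, b) := by rw [← hEneg (0, b)]; simp
    rw [h3]; ring
  have hs1 : ∑ χ, u χ = Fintype.card B * (n - T) := by
    have : ((∑ χ, u χ : ℤ) : ℂ) = ((Fintype.card B * (n - T) : ℤ) : ℂ) := by
      push_cast
      simp_rw [hu1]
      rw [Finset.sum_sub_distrib, hy1]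
      simp only [Finset.sum_const, Finset.card_univ, nsmul_eq_mul, AddChar.card_eq]
      ring
    exact_mod_cast this
  have hs2 : ∑ χ, u χ ^ 2 = Fintype.card B * (n ^ 2 - 2 * n * T + (T ^ 2 + (e0 - T))) := by
    have : ((∑ χ, u χ ^ 2 : ℤ) : ℂ) =
        ((Fintype.card B * (n ^ 2 - 2 * n * T + (T ^ 2 + (e0 - T))) : ℤ) : ℂ) := by
      push_cast
      simp_rw [hu1]
      have e : ∀ χ : AddChar B ℂ, ((n : ℂ) - ∑ b, (E (0, b) : ℂ) * χ b) ^ 2 =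
        n ^ 2 - 2 * n * (∑ b, (E (0, b) : ℂ) * χ b) + (∑ b, (E (0, b) : ℂ) * χ b) ^ 2 := by
        intro χ; ring
      simp_rw [e]
      rw [Finset.sum_add_distrib, Finset.sum_sub_distrib, ← Finset.mul_sum, hy1, hy2]
      simp only [Finset.sum_const, Finset.card_univ, nsmul_eq_mul, AddChar.card_eq]
      push_cast
      ring
    exact_mod_cast this
  rw [← Finset.add_sum_erase _ _ (Finset.mem_univ (0 : AddChar B ℂ)), hu2 0 rfl] at hs1 hs2
  have h3 : n * ∑ χ ∈ Finset.univ.erase (0 : AddChar B ℂ), u χ ≤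
      q * ∑ χ ∈ Finset.univ.erase (0 : AddChar B ℂ), u χ ^ 2 := by
    rw [Finset.mul_sum, Finset.mul_sum]
    exact Finset.sum_le_sum fun χ hχ => hu3 χ (Finset.mem_erase.1 hχ).1
  have h4 : ∑ χ ∈ Finset.univ.erase (0 : AddChar B ℂ), u χ =
    Fintype.card B * (n - T) - (n - e0) := by linarith
  have h5 : ∑ χ ∈ Finset.univ.erase (0 : AddChar B ℂ), u χ ^ 2 =
    Fintype.card B * (n ^ 2 - 2 * n * T + (T ^ 2 + (e0 - T))) - (n - e0) ^ 2 := by linarith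
  rw [h4, h5] at h3
  exact h3

/-- the final numerical contradiction -/
lemma final_num (s α q r k' m' c' T : ℤ) (hα : 2 ≤ α) (hq : 2 ≤ q) (hr : 1 ≤ r) (hk : 1 ≤ k')
    (hm : 1 ≤ m') (hsx : s = α + q * k') (hT : T = q * m' * (s + 1))
    (hI1 : s ≤ k' + α * r)
    (hI2 : (q * k' + T) * s ≤ q * ((s + 1) * (q * k') + c'))
    (hc : q * r * c' = s * T - q * k') : False := by
  have hs : 0 < s := by nlinarith
  have hr1 : 0 ≤ r - 1 := by linarith
  have h1 : (q * k' + T) * s * r ≤ q * ((s + 1) * (q * k')) * r + (s * T - q * k') := by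
    rw [← hc]; nlinarith
  have h2 : q * (s * (s + 1) * (r - 1)) ≤ s * T * (r - 1) := by
    have : q * (s + 1) ≤ T := by
      rw [hT]; nlinarith [mul_pos (by linarith : (0 : ℤ) < q) (by linarith : 0 < s + 1)]
    nlinarith [mul_nonneg hs.le hr1]
  have h3 : q * (s * (s + 1) * (r - 1)) ≤ q * ((s + 1) * (q * k') * r - k' - s * r * k') := by
    nlinarith
  have h4 := le_of_mul_le_mul_left h3 (by linarith)
  have h5 : k' * (1 + s * r) ≤ (s + 1) * (s - α * r) := by
    have : q * k' = s - α := by linarith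
    rw [this] at h4
    nlinarith
  have h6 : k' * (1 + s * r) ≤ k' * (s + 1) := by nlinarith
  have h7 := le_of_mul_le_mul_left h6 (by linarith)
  have h8 : r = 1 := by nlinarith
  subst h8
  nlinarith

/-- arithmetic of S3 -/
lemma s3_num (s t α n q c' b : ℤ) (hn : n = s + t + 1 - α) (hα : 0 ≤ α) (hαs : α < s)
    (hc0 : 0 < c') (hαB : α * b = (s + 1) * c')
    (hS3 : n * (b * (n - (t + 1)) - (n - (n + c'))) ≤
      q * (b * (n ^ 2 - 2 * n * (t + 1) + ((t + 1) ^ 2 + (n + c' - (t + 1)))) - (n - (n + c')) ^ 2)) :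
    n * s ≤ q * ((s + 1) * (s - α) + c') := by
  set x := s - α with hx
  have h1 : n * (b * x + c') ≤ q * (b * (x ^ 2 + x + c') - c' ^ 2) := by
    have e1 : b * (n - (t + 1)) - (n - (n + c')) = b * x + c' := by rw [hn, hx]; ring
    have e2 : b * (n ^ 2 - 2 * n * (t + 1) + ((t + 1) ^ 2 + (n + c' - (t + 1)))) - (n - (n + c')) ^ 2
      = b * (x ^ 2 + x + c') - c' ^ 2 := by rw [hn, hx]; ring
    rw [e1, e2] at hS3; exact hS3
  have h2 : c' * (x + 1) * (n * s) ≤ c' * (x + 1) * (q * ((s + 1) * x + c')) := by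
    have h3 := mul_le_mul_of_nonneg_left h1 hα
    have e1 : α * (n * (b * x + c')) = c' * (x + 1) * (n * s) := by
      rw [hx]; linear_combination n * (s - α) * hαB
    have e2 : α * (q * (b * (x ^ 2 + x + c') - c' ^ 2)) = c' * (x + 1) * (q * ((s + 1) * x + c')) := by
      rw [hx]; linear_combination q * ((s - α) ^ 2 + (s - α) + c') * hαB
    rw [e1, e2] at h3; exact h3
  exact le_of_mul_le_mul_left h2 (mul_pos hc0 (by linarith))

set_option maxHeartbeats 1000000 in
lemma core_false (p a : ℕ) [Fact p.Prime] (hA : Fintype.card A = p ^ a)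
    (hB : ¬ p ∣ Fintype.card B) (s t α n : ℤ) (hn : n = s + t + 1 - α)
    (hα : 2 ≤ α) (hαs : α < s) (hαt : α < t)
    (E L : A × B → ℤ)
    (hE0 : E 0 = t + 1)
    (hE01 : ∀ g, g ≠ 0 → E g = 0 ∨ E g = 1)
    (hEneg : ∀ g, E (-g) = E g)
    (hEsum : ∑ g, E g = (t + 1) * (s + 1))
    (hEE : ∀ z, ∑ y, E y * E (z - y) = n * E z + α * (t + 1))
    (hEL : ∀ z, ∑ y, E y * L (z - y) = n * L z + α)
    (hLsum : ∑ g, L g = s + 1)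
    (hv : α * ((Fintype.card A : ℤ) * Fintype.card B) = (s + 1) * (s * t + α))
    (hst : s + 1 ∣ t + 1) (hpn : (p : ℤ) ∣ n) (hp : ¬ (p : ℤ) ∣ s + 1) : False := by
  classical
  have hpp : p.Prime := Fact.out
  have hpZ : Prime (p : ℤ) := Nat.prime_iff_prime_int.1 hpp
  have hn0 : 0 < n := by linarith
  have hApos : (0 : ℤ) < Fintype.card A := by exact_mod_cast Fintype.card_pos
  have hBpos : (0 : ℤ) < Fintype.card B := by exact_mod_cast Fintype.card_pos
  -- S1
  have hS1 := stepP p a hA s t α n hn E L hEsum hEL hLsum hv hp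
  set c' : ℤ := ∑ b, E (0, b) - n with hc'
  have hst0 : 0 < s * t + α := by nlinarith
  have hc0 : 0 < c' := by
    by_contra h
    nlinarith
  -- S0
  have ha : a ≠ 0 := by
    intro ha
    rw [ha, pow_zero] at hA
    have hsub : Subsingleton A := Fintype.card_le_one_iff_subsingleton.1 hA.le
    have h1 := (stepB p 1 hB s t α n hn E hE0 (by linarith) hE01 hEneg hEsum hEE hv
      (by simpa using hpn)).1
    have hcard : (Fintype.card (A × B) : ℤ) = Fintype.card A * Fintype.card B := by
      rw [Fintype.card_prod]; push_cast; ring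
    have hphi : ∀ b, ∑ a, E (a, b) = E (0, b) := by
      intro b
      exact Fintype.sum_subsingleton _ 0
    simp only [hphi, pow_one] at h1
    have h2 : ∀ g g' : A × B, (p : ℤ) ∣ E g - E g' := by
      rintro ⟨x, b⟩ ⟨x', b'⟩
      rw [Subsingleton.elim x 0, Subsingleton.elim x' 0]
      have h3 := dvd_sub (h1 b) (h1 b')
      have h4 : (p : ℤ) ∣ (Fintype.card B : ℤ) * (E (0, b) - E (0, b')) := by
        have e : (Fintype.card B : ℤ) * (E (0, b) - E (0, b')) =
          ((Fintype.card B : ℤ) * E (0, b) - (t + 1) * (s + 1)) -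
          ((Fintype.card B : ℤ) * E (0, b') - (t + 1) * (s + 1)) := by ring
        rw [e]; exact h3
      exact (hpZ.dvd_or_dvd h4).resolve_left (fun h => hB (by exact_mod_cast h))
    have h5 : ∃ g, g ≠ 0 ∧ E g = 1 := by
      by_contra! hcon
      have : ∑ g, E g = E 0 := Fintype.sum_eq_single 0 fun g hg =>
        (hE01 g hg).resolve_right (hcon g hg)
      rw [hEsum, hE0] at this
      nlinarith
    have h6 : ∃ g, g ≠ 0 ∧ E g = 0 := by
      by_contra! hcon
      have h7 : ∑ g, E g = (t + 1) + ((Fintype.card (A × B) : ℤ) - 1) := by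
        rw [← Finset.add_sum_erase _ _ (Finset.mem_univ (0 : A × B)), hE0]
        congr 1
        rw [Finset.sum_congr rfl (g := fun _ => (1 : ℤ)) fun g hg =>
          (hE01 g (Finset.mem_erase.1 hg).1).resolve_left (hcon g (Finset.mem_erase.1 hg).1)]
        rw [Finset.sum_const, Finset.card_erase_of_mem (Finset.mem_univ _), Finset.card_univ,
          nsmul_eq_mul, mul_one, Nat.cast_sub Fintype.card_pos]
        simp
      rw [hEsum, hcard] at h7
      have h8 : (Fintype.card A : ℤ) * Fintype.card B = (t + 1) * s + 1 := by linarith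
      rw [h8] at hv
      have h10 : s * t * (s + 1 - α) = 0 := by nlinarith
      have : 0 < s * t * (s + 1 - α) := mul_pos (mul_pos (by linarith) (by linarith)) (by linarith)
      linarith
    obtain ⟨g, _, hg⟩ := h5
    obtain ⟨g', _, hg'⟩ := h6
    have := h2 g g'
    rw [hg, hg', sub_zero] at this
    exact hpZ.not_unit (isUnit_of_dvd_one this)
  -- q
  have hpA : (p : ℤ) ∣ Fintype.card A := by
    rw [hA]; push_cast; exact dvd_pow_self _ ha
  obtain ⟨f, -, hf⟩ : ∃ f ≤ a, Int.gcd n (Fintype.card A) = p ^ f := by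
    refine (Nat.dvd_prime_pow hpp).1 ?_
    rw [← hA]
    exact_mod_cast Int.gcd_dvd_right n (Fintype.card A)
  set q : ℤ := (p : ℤ) ^ f with hq
  have hqg : q = Int.gcd n (Fintype.card A) := by rw [hf, hq]; push_cast; rfl
  have hqn : q ∣ n := hqg ▸ Int.gcd_dvd_left ..
  have hqA : q ∣ (Fintype.card A : ℤ) := hqg ▸ Int.gcd_dvd_right ..
  have hqpos : 0 < q := pow_pos (by exact_mod_cast hpp.pos) _
  have hpq : (p : ℤ) ∣ q := by rw [hqg]; exact Int.dvd_coe_gcd hpn hpA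
  have hq2 : 2 ≤ q := le_trans (by exact_mod_cast hpp.two_le) (Int.le_of_dvd hqpos hpq)
  have hcop : IsCoprime q (s + 1) :=
    IsCoprime.pow_left ((Prime.coprime_iff_not_dvd hpZ).2 hp)
  have hqk : q ∣ (t + 1) * (s + 1) := by
    have h : (t + 1) * (s + 1) = Fintype.card A * c' + n := by rw [hS1, hn]; ring
    rw [h]
    exact dvd_add (hqA.mul_right _) hqn
  have hqt : q ∣ t + 1 := hcop.dvd_of_dvd_mul_right hqk
  obtain ⟨m, hm⟩ := hst
  have hqm : q ∣ m := hcop.dvd_of_dvd_mul_left (hm ▸ hqt)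
  obtain ⟨m', rfl⟩ := hqm
  have hqx : q ∣ s - α := by
    have : s - α = n - (t + 1) := by rw [hn]; ring
    rw [this]; exact dvd_sub hqn hqt
  obtain ⟨k', hk'⟩ := hqx
  obtain ⟨r, hr⟩ := hqA
  have hk1 : 1 ≤ k' := by
    by_contra h
    nlinarith
  have hr1 : 1 ≤ r := by
    by_contra h
    nlinarith
  have hm1 : 1 ≤ m' := by
    by_contra h
    have : (s + 1) * (q * m') ≤ 0 :=
      mul_nonpos_of_nonneg_of_nonpos (by linarith)
        (mul_nonpos_of_nonneg_of_nonpos hqpos.le (by linarith))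
    linarith
  have htq : q * (s + 1) ≤ t + 1 := by
    rw [hm]
    nlinarith [mul_pos hqpos (by linarith : 0 < s + 1)]
  -- S2
  obtain ⟨F, hF, hF2⟩ := (stepB p f hB s t α n hn E hE0 (by linarith) hE01 hEneg hEsum hEE hv
      hqn).2 hqk
  have hI1 : s ≤ k' + α * r := by
    have h1 : q * ((t + 1) * s) ≤ (t + 1) * (n + α * (Fintype.card A : ℤ) - (t + 1)) := by
      have e : n * F - F ^ 2 + q * F ≤ n * (t + 1) - (t + 1) ^ 2 + q * (t + 1) := by
        have hneg : n + q - F - (t + 1) ≤ 0 := by nlinarith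
        nlinarith [mul_nonneg (sub_nonneg.2 hF) (neg_nonneg.2 hneg)]
      change q * _ ≤ _ at hF2
      nlinarith
    have h2 : (t + 1) * (q * s) ≤ (t + 1) * (q * (k' + α * r)) := by
      have : q * (k' + α * r) = n + α * (Fintype.card A : ℤ) - (t + 1) := by
        rw [hr, hn]; linear_combination -hk'
      rw [this]; linarith
    exact le_of_mul_le_mul_left (le_of_mul_le_mul_left h2 (by linarith)) hqpos
  -- S3
  have hS3 := stepC n (α * (t + 1)) q hn0 hqpos E hqg hE01 hEneg hEE (∑ b, E (0, b)) (t + 1) rfl hE0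
  have hI2 : n * s ≤ q * ((s + 1) * (s - α) + c') := by
    have he : ∑ b, E (0, b) = n + c' := by rw [hc']; ring
    rw [he] at hS3
    have hαB : α * (Fintype.card B : ℤ) = (s + 1) * c' := by
      apply mul_left_cancel₀ hApos.ne'
      linear_combination hv - (s + 1) * hS1
    exact s3_num s t α n q c' _ hn (by linarith) hαs hc0 hαB hS3
  refine final_num s α q r k' m' c' (t + 1) hα hq2 hr1 hk1 hm1 (by linarith) (by rw [hm]; ring) hI1
    ?_ ?_
  · rw [← hk']
    have : s - α + (t + 1) = n := by rw [hn]; ring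
    rw [this]; exact hI2
  · rw [← hr, hS1, ← hk']; ring

end core

section geom
variable {G : Type*} [CommGroup G] [Fintype G] [DecidableEq G]

/-- number of lines through two points -/
def joinNum (F : Finset (Finset G)) (x y : G) : ℤ :=
  ((F.filter fun M => x ∈ M ∧ y ∈ M).card : ℤ)

lemma joinNum_symm (F : Finset (Finset G)) (x y : G) : joinNum F x y = joinNum F y x := by
  unfold joinNum
  simp_rw [and_comm]

lemma joinNum_eq_sum (F : Finset (Finset G)) (x y : G) :
    joinNum F x y = ∑ M ∈ F.filter (fun M => x ∈ M), if y ∈ M then (1 : ℤ) else 0 := by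
  unfold joinNum
  rw [← Finset.sum_filter, Finset.filter_filter]
  simp

lemma image_mul_mul (g h : G) (L : Finset G) :
    (L.image (fun y => h * y)).image (fun y => g * y) = L.image (fun y => g * h * y) := by
  rw [Finset.image_image]
  congr 1
  funext y
  simp [mul_assoc]

lemma image_one_mul (L : Finset G) : L.image (fun y => (1 : G) * y) = L := by
  simp

lemma joinNum_translate (F : Finset (Finset G))
    (h5 : ∀ g : G, ∀ L ∈ F, L.image (fun y => g * y) ∈ F) (g x y : G) :
    joinNum F (g * x) (g * y) = joinNum F x y := by
  unfold joinNum
  congr 1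
  symm
  refine Finset.card_bij' (fun L _ => L.image (fun y => g * y))
    (fun L _ => L.image (fun y => g⁻¹ * y)) ?_ ?_ ?_ ?_
  · intro L hL
    rw [Finset.mem_filter] at hL ⊢
    exact ⟨h5 g L hL.1, Finset.mem_image_of_mem _ hL.2.1, Finset.mem_image_of_mem _ hL.2.2⟩
  · intro L hL
    rw [Finset.mem_filter] at hL ⊢
    refine ⟨h5 g⁻¹ L hL.1, ?_, ?_⟩
    · exact Finset.mem_image.2 ⟨g * x, hL.2.1, by simp⟩
    · exact Finset.mem_image.2 ⟨g * y, hL.2.2, by simp⟩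
  · intro L _
    simp only [image_mul_mul, inv_mul_cancel, image_one_mul]
  · intro L _
    simp only [image_mul_mul, mul_inv_cancel, image_one_mul]

variable (F : Finset (Finset G)) (s t α : ℕ)

lemma sum_joinNum (h1 : ∀ L ∈ F, L.card = s + 1)
    (h2 : ∀ x : G, (F.filter fun L => x ∈ L).card = t + 1) (x : G) :
    ∑ y, joinNum F x y = (t + 1) * (s + 1) := by
  simp_rw [joinNum_eq_sum]
  rw [Finset.sum_comm]
  have : ∀ M ∈ F.filter (fun M => x ∈ M), ∑ y : G, (if y ∈ M then (1 : ℤ) else 0) = s + 1 := by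
    intro M hM
    rw [Finset.sum_ite_mem]
    simp [h1 M (Finset.mem_filter.1 hM).1]
  rw [Finset.sum_congr rfl this, Finset.sum_const, h2]
  simp

lemma sum_line_joinNum (h1 : ∀ L ∈ F, L.card = s + 1)
    (h2 : ∀ x : G, (F.filter fun L => x ∈ L).card = t + 1)
    (h3 : ∀ L ∈ F, ∀ M ∈ F, ∀ x y, x ≠ y → x ∈ L → x ∈ M → y ∈ L → y ∈ M → L = M)
    (h4 : ∀ x : G, ∀ L ∈ F, x ∉ L → (F.filter fun M => x ∈ M ∧ ∃ y ∈ L, y ∈ M).card = α)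
    (L : Finset G) (hL : L ∈ F) (x : G) :
    ∑ y ∈ L, joinNum F x y =
      ((s : ℤ) + t + 1 - α) * (if x ∈ L then 1 else 0) + α := by
  simp_rw [joinNum_eq_sum]
  rw [Finset.sum_comm]
  have e : ∀ M : Finset G, ∑ y ∈ L, (if y ∈ M then (1 : ℤ) else 0) = ((L ∩ M).card : ℤ) := by
    intro M
    rw [Finset.sum_ite_mem]; simp
  simp_rw [e]
  by_cases hx : x ∈ L
  · rw [if_pos hx]
    have hmem : L ∈ F.filter (fun M => x ∈ M) := Finset.mem_filter.2 ⟨hL, hx⟩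
    rw [← Finset.add_sum_erase _ _ hmem, Finset.inter_self, h1 L hL]
    have : ∀ M ∈ (F.filter (fun M => x ∈ M)).erase L, ((L ∩ M).card : ℤ) = 1 := by
      intro M hM
      rw [Finset.mem_erase, Finset.mem_filter] at hM
      have : L ∩ M = {x} := by
        ext y
        rw [Finset.mem_inter, Finset.mem_singleton]
        constructor
        · rintro ⟨hy1, hy2⟩
          by_contra hne
          exact hM.1 (h3 L hL M hM.2.1 y x hne hy1 hy2 hx hM.2.2).symm
        · rintro rfl
          exact ⟨hx, hM.2.2⟩
      rw [this]; simp
    rw [Finset.sum_congr rfl this, Finset.sum_const, Finset.card_erase_of_mem hmem, h2]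
    push_cast
    simp
    ring
  · rw [if_neg hx]
    have : ∀ M ∈ F.filter (fun M => x ∈ M), ((L ∩ M).card : ℤ) =
        if ∃ y ∈ L, y ∈ M then 1 else 0 := by
      intro M hM
      rw [Finset.mem_filter] at hM
      split_ifs with h
      · obtain ⟨y, hy1, hy2⟩ := h
        have : L ∩ M = {y} := by
          ext z
          rw [Finset.mem_inter, Finset.mem_singleton]
          constructor
          · rintro ⟨hz1, hz2⟩
            by_contra hne
            have := h3 L hL M hM.1 z y hne hz1 hz2 hy1 hy2
            exact hx (this ▸ hM.2)
          · rintro rfl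
            exact ⟨hy1, hy2⟩
        rw [this]; simp
      · have : L ∩ M = ∅ := by
          ext z
          simp only [Finset.mem_inter, Finset.notMem_empty, iff_false]
          rintro ⟨hz1, hz2⟩
          exact h ⟨z, hz1, hz2⟩
        rw [this]; simp
    rw [Finset.sum_congr rfl this, ← Finset.sum_filter, Finset.filter_filter, Finset.sum_const,
      h4 x L hL hx]
    simp

lemma sum_join_join (h1 : ∀ L ∈ F, L.card = s + 1)
    (h2 : ∀ x : G, (F.filter fun L => x ∈ L).card = t + 1)
    (h3 : ∀ L ∈ F, ∀ M ∈ F, ∀ x y, x ≠ y → x ∈ L → x ∈ M → y ∈ L → y ∈ M → L = M)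
    (h4 : ∀ x : G, ∀ L ∈ F, x ∉ L → (F.filter fun M => x ∈ M ∧ ∃ y ∈ L, y ∈ M).card = α)
    (x z : G) :
    ∑ y, joinNum F x y * joinNum F y z =
      ((s : ℤ) + t + 1 - α) * joinNum F x z + α * (t + 1) := by
  have e : ∀ y, joinNum F x y * joinNum F y z =
      ∑ M ∈ F.filter (fun M => x ∈ M), if y ∈ M then joinNum F z y else 0 := by
    intro y
    rw [joinNum_eq_sum F x y, Finset.sum_mul, joinNum_symm F y z]
    refine Finset.sum_congr rfl fun M _ => ?_
    split_ifs <;> simp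
  simp_rw [e]
  rw [Finset.sum_comm]
  have e2 : ∀ M ∈ F.filter (fun M => x ∈ M), ∑ y, (if y ∈ M then joinNum F z y else 0) =
      ((s : ℤ) + t + 1 - α) * (if z ∈ M then 1 else 0) + α := by
    intro M hM
    rw [Finset.sum_ite_mem, Finset.univ_inter,
      sum_line_joinNum F s t α h1 h2 h3 h4 M (Finset.mem_filter.1 hM).1]
  rw [Finset.sum_congr rfl e2, Finset.sum_add_distrib, ← Finset.mul_sum, ← joinNum_eq_sum,
    Finset.sum_const, h2]
  simp
  ring

lemma joinNum_self (h2 : ∀ x : G, (F.filter fun L => x ∈ L).card = t + 1) (x : G) :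
    joinNum F x x = t + 1 := by
  unfold joinNum
  simp [h2]

lemma joinNum_ne
    (h3 : ∀ L ∈ F, ∀ M ∈ F, ∀ x y, x ≠ y → x ∈ L → x ∈ M → y ∈ L → y ∈ M → L = M)
    (x y : G) (hxy : x ≠ y) : joinNum F x y = 0 ∨ joinNum F x y = 1 := by
  have : (F.filter fun M => x ∈ M ∧ y ∈ M).card ≤ 1 := by
    rw [Finset.card_le_one]
    intro L hL M hM
    rw [Finset.mem_filter] at hL hM
    exact h3 L hL.1 M hM.1 x y hxy hL.2.1 hM.2.1 hL.2.2 hM.2.2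
  unfold joinNum
  omega

lemma card_points (h1 : ∀ L ∈ F, L.card = s + 1)
    (h2 : ∀ x : G, (F.filter fun L => x ∈ L).card = t + 1)
    (h3 : ∀ L ∈ F, ∀ M ∈ F, ∀ x y, x ≠ y → x ∈ L → x ∈ M → y ∈ L → y ∈ M → L = M)
    (h4 : ∀ x : G, ∀ L ∈ F, x ∉ L → (F.filter fun M => x ∈ M ∧ ∃ y ∈ L, y ∈ M).card = α)
    (L : Finset G) (hL : L ∈ F) :
    (α : ℤ) * Fintype.card G = (s + 1) * (s * t + α) := by
  have h : ∑ x, ∑ y ∈ L, joinNum F x y = ∑ x : G,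
      (((s : ℤ) + t + 1 - α) * (if x ∈ L then 1 else 0) + α) :=
    Finset.sum_congr rfl fun x _ => sum_line_joinNum F s t α h1 h2 h3 h4 L hL x
  rw [Finset.sum_comm] at h
  have e : ∀ y ∈ L, ∑ x, joinNum F x y = (t + 1) * (s + 1) := by
    intro y _
    simp_rw [joinNum_symm F _ y]
    exact sum_joinNum F s t h1 h2 y
  rw [Finset.sum_congr rfl e, Finset.sum_const, Finset.sum_add_distrib, ← Finset.mul_sum,
    Finset.sum_ite_mem, Finset.univ_inter, Finset.sum_const, Finset.sum_const, h1 L hL,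
    Finset.card_univ] at h
  simp only [nsmul_eq_mul] at h
  push_cast at h
  linear_combination -h

lemma card_dvd (h1 : ∀ L ∈ F, L.card = s + 1)
    (h2 : ∀ x : G, (F.filter fun L => x ∈ L).card = t + 1)
    (h5 : ∀ g : G, ∀ L ∈ F, L.image (fun y => g * y) ∈ F)
    (h6 : ∀ g : G, ∀ L ∈ F, L.image (fun y => g * y) = L → g = 1) : s + 1 ∣ t + 1 := by
  have hcount : Fintype.card G * (t + 1) = F.card * (s + 1) := by
    have := Finset.sum_card_bipartiteAbove_eq_sum_card_bipartiteBelow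
      (s := (Finset.univ : Finset G)) (t := F) (fun x L => x ∈ L)
    unfold Finset.bipartiteAbove Finset.bipartiteBelow at this
    rw [Finset.sum_congr rfl (fun x _ => h2 x), Finset.sum_const,
      Finset.sum_congr rfl (g := fun _ => s + 1) (fun L hL => by
        rw [← h1 L hL]; congr 1; ext; simp), Finset.sum_const] at this
    simpa using this
  let act : MulAction G {L // L ∈ F} :=
    { smul := fun g L => ⟨L.1.image (fun y => g * y), h5 g L.1 L.2⟩
      one_smul := fun L => Subtype.ext (image_one_mul L.1)
      mul_smul := fun g h L => Subtype.ext (image_mul_mul g h L.1).symm }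
  have hstab : ∀ L : {L // L ∈ F}, MulAction.stabilizer G L = ⊥ := by
    intro L
    rw [eq_bot_iff]
    intro g hg
    rw [MulAction.mem_stabilizer_iff] at hg
    exact h6 g L.1 L.2 (congrArg Subtype.val hg)
  have hc := Nat.card_congr (MulAction.selfEquivOrbitsQuotientProd hstab)
  rw [Nat.card_prod, Nat.card_eq_fintype_card, Nat.card_eq_fintype_card (α := G),
    Fintype.card_coe] at hc
  rw [hc] at hcount
  refine ⟨Nat.card (Quotient (MulAction.orbitRel G {L // L ∈ F})), ?_⟩
  apply Nat.eq_of_mul_eq_mul_left (Fintype.card_pos (α := G))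
  rw [hcount]; ring


lemma exists_decomp (p : ℕ) [Fact p.Prime] : ∃ P Q : Subgroup G,
    (∃ a, Nat.card P = p ^ a) ∧ ¬ p ∣ Nat.card Q ∧
    Function.Bijective (fun x : P × Q => (x.1 : G) * x.2) := by
  obtain ⟨P⟩ : Nonempty (Sylow p G) := inferInstance
  have hcop : Nat.Coprime (Nat.card P) (P : Subgroup G).index := P.card_coprime_index
  obtain ⟨Q, hQ⟩ := Subgroup.exists_right_complement'_of_coprime hcop
  refine ⟨P, Q, ?_, ?_, hQ⟩
  · exact IsPGroup.iff_card.1 P.isPGroup'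
  · have : Nat.card Q = (P : Subgroup G).index := hQ.symm.index_eq_card.symm
    rw [this]
    exact P.not_dvd_index

end geom

lemma geom_false {G : Type*} [CommGroup G] [Fintype G] [DecidableEq G]
    (F : Finset (Finset G)) (s t α : ℕ) (hα : 2 ≤ α) (hαs : α < s) (hαt : α < t)
    (h1 : ∀ L ∈ F, L.card = s + 1)
    (h2 : ∀ x : G, (F.filter fun L => x ∈ L).card = t + 1)
    (h3 : ∀ L ∈ F, ∀ M ∈ F, ∀ x y, x ≠ y → x ∈ L → x ∈ M → y ∈ L → y ∈ M → L = M)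
    (h4 : ∀ x : G, ∀ L ∈ F, x ∉ L → (F.filter fun M => x ∈ M ∧ ∃ y ∈ L, y ∈ M).card = α)
    (h5 : ∀ g : G, ∀ L ∈ F, L.image (fun y => g * y) ∈ F)
    (h6 : ∀ g : G, ∀ L ∈ F, L.image (fun y => g * y) = L → g = 1)
    (p : ℕ) (hp : p.Prime) (hpn : (p : ℤ) ∣ (s : ℤ) + t + 1 - α) (hps : ¬ p ∣ s + 1) : False := by
  classical
  have hfact : Fact p.Prime := ⟨hp⟩
  obtain ⟨P, Q, ⟨a, ha⟩, hQ, hbij⟩ := exists_decomp (G := G) p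
  obtain ⟨L, hL⟩ : ∃ L, L ∈ F := by
    have : 0 < (F.filter fun L => (1 : G) ∈ L).card := by rw [h2]; omega
    obtain ⟨L, hL⟩ := Finset.card_pos.1 this
    exact ⟨L, (Finset.mem_filter.1 hL).1⟩
  let φ : Additive P × Additive Q → G := fun x => (x.1.toMul : G) * (x.2.toMul : G)
  have hφ : Function.Bijective φ := hbij
  have hφ0 : φ 0 = 1 := by simp [φ]
  have hφneg : ∀ x, φ (-x) = (φ x)⁻¹ := by intro x; simp [φ, mul_comm]
  have hφsub : ∀ x y, φ (x - y) = (φ y)⁻¹ * φ x := by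
    intro x y
    simp only [φ, Prod.fst_sub, Prod.snd_sub, toMul_sub, Subgroup.coe_div, mul_inv]
    simp only [div_eq_mul_inv]
    ac_rfl
  have hsum : ∀ f : G → ℤ, ∑ x, f (φ x) = ∑ g, f g := fun f => hφ.sum_comp f
  have htr : ∀ x y z, joinNum F (z * x) (z * y) = joinNum F x y := fun x y z =>
    joinNum_translate F h5 z x y
  have htr' : ∀ y z : G, joinNum F 1 (y⁻¹ * z) = joinNum F y z := by
    intro y z
    rw [← htr 1 (y⁻¹ * z) y]; simp
  have hcardA : Fintype.card (Additive P) = p ^ a := by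
    rw [← ha, Nat.card_eq_fintype_card]; exact Fintype.card_additive ..
  have hcardB : ¬ p ∣ Fintype.card (Additive Q) := by
    have : Fintype.card (Additive Q) = Nat.card Q := by
      rw [Nat.card_eq_fintype_card]; exact Fintype.card_additive ..
    rw [this]; exact hQ
  have hcard : Fintype.card (Additive P) * Fintype.card (Additive Q) = Fintype.card G := by
    rw [← Fintype.card_prod]; exact Fintype.card_of_bijective hφ
  refine core_false (A := Additive P) (B := Additive Q) p a hcardA hcardB s t α _ rfl
    (by exact_mod_cast hα) (by exact_mod_cast hαs) (by exact_mod_cast hαt)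
    (fun x => joinNum F 1 (φ x)) (fun x => if φ x ∈ L then 1 else 0)
    ?_ ?_ ?_ ?_ ?_ ?_ ?_ ?_ ?_ hpn (by exact_mod_cast hps)
  · simp only [hφ0]; exact joinNum_self F t h2 1
  · intro g hg
    refine joinNum_ne F h3 _ _ fun h => hg (hφ.1 ?_)
    rw [← h, hφ0]
  · intro g
    simp only [hφneg]
    rw [← htr _ _ (φ g)]
    simp [joinNum_symm]
  · rw [hsum (fun g => joinNum F 1 g)]
    exact sum_joinNum F s t h1 h2 1
  · intro z
    simp only [hφsub, htr']
    rw [hsum (fun g => joinNum F 1 g * joinNum F g (φ z))]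
    exact sum_join_join F s t α h1 h2 h3 h4 1 (φ z)
  · intro z
    rw [← sum_line_joinNum F s t α h1 h2 h3 h4 L hL (φ z)]
    rw [← Fintype.sum_equiv (Equiv.subLeft z) (fun y => joinNum F 1 (φ (z - y)) *
      (if φ y ∈ L then 1 else 0)) _ (fun y => by simp)]
    simp only [hφsub, htr']
    rw [hsum (fun g => joinNum F g (φ z) * (if g ∈ L then 1 else 0))]
    simp only [mul_ite, mul_one, mul_zero]
    rw [Finset.sum_ite_mem, Finset.univ_inter]
    exact Finset.sum_congr rfl fun y _ => joinNum_symm F _ _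
  · rw [hsum (fun g => if g ∈ L then (1 : ℤ) else 0), Finset.sum_ite_mem, Finset.univ_inter]
    simp [h1 L hL]
  · rw [← card_points F s t α h1 h2 h3 h4 L hL, ← hcard]
    push_cast; ring
  · exact_mod_cast card_dvd F s t h1 h2 h5 h6

end RigidPG

/-- for a proper `pg(s,t,α)` of rigid type with abelian Singer group `G`
and `s > 2α - 1`, every prime divisor of `Δ = (s+t-α+1)²` divides `s+1`. -/
theorem rigid_type_prime_divisors_of_delta
    (G : Type*) [CommGroup G] [Fintype G] [DecidableEq G]
    (s t α : ℕ) (hα2 : 2 ≤ α) (hαs : α < s) (hαt : α < t)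
    (𝓛 : Set (Finset G)) (hpg : IsPGSinger G 𝓛 s t α) (hrig : RigidType G 𝓛)
    (hs : 2 * α - 1 < s) :
    ∀ p : ℕ, p.Prime → p ∣ (s + t - α + 1) ^ 2 → p ∣ s + 1 := by
  classical
  intro p hp hdvd
  by_contra hps
  have hdvd' := hp.dvd_of_dvd_pow hdvd
  have hpn : (p : ℤ) ∣ (s : ℤ) + t + 1 - α := by
    have h : ((s + t - α + 1 : ℕ) : ℤ) = (s : ℤ) + t + 1 - α := by omega
    rw [← h]; exact_mod_cast hdvd'
  have hmem : ∀ L, L ∈ 𝓛.toFinite.toFinset ↔ L ∈ 𝓛 := fun L => Set.Finite.mem_toFinset _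
  refine RigidPG.geom_false 𝓛.toFinite.toFinset s t α hα2 hαs hαt
    ?_ ?_ ?_ ?_ ?_ ?_ p hp hpn hps
  · intro L hL
    exact hpg.line_card L ((hmem L).1 hL)
  · intro x
    rw [← hpg.point_deg x, ← Set.ncard_coe_finset]
    congr 1
    ext L
    simp
  · intro L hL M hM x y hxy hxL hxM hyL hyM
    by_contra hne
    have h := hpg.line_inter L ((hmem L).1 hL) M ((hmem M).1 hM) hne
    rw [Set.ncard_le_one (Set.toFinite _)] at h
    exact hxy (h x ⟨hxL, hxM⟩ y ⟨hyL, hyM⟩)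
  · intro x L hL hx
    rw [← hpg.alpha_ax x L ((hmem L).1 hL) hx, ← Set.ncard_coe_finset]
    congr 1
    ext M
    simp
  · intro g L hL
    exact (hmem _).2 (hpg.translate g L ((hmem L).1 hL))
  · intro g L hL h
    exact hrig g L ((hmem L).1 hL) h
end

section
/- Let s, t, α be positive integers with 2 ≤ α ≤ 1000, α < s and α < t, and let G be a finite abelian group with line set 𝓛 making (G,𝓛) a proper partial geometry pg(s,t,α) admitting G as an abelian Singer group, such that the pair is of rigid type (axioms (i)–(vi) of the encoding). Then (s,t,α) is one of the five triples (5,5,2), (11,23,3), (39,39,15), (272,272,104), (2295,4591,615). -/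
/-! ### The numerical checker -/

/-- Evaluate `n` to a literal before passing it on (for kernel computation). -/
def forceN {β : Type} (n : ℕ) (f : ℕ → β) : β :=
  Nat.rec (f 0) (fun m _ => f (Nat.succ m)) n

/-- `f i` holds for all `i < N`. -/
def allB (N : ℕ) (f : ℕ → Bool) : Bool :=
  Nat.rec true (fun i ih => and (f i) ih) N

/-- The moment inequality fails for the subgroup of order `Q` with weight `K`. -/
def killK (T Q K π : ℕ) : Bool :=
  forceN (Q * T) fun QT =>
  cond (Nat.blt QT K) true <|
  forceN (QT - K) fun T1 =>
  cond (Nat.beq (T1 % π) 0) (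
    forceN (Q * (T * T + K - T)) fun A =>
    cond (Nat.blt A (K * K)) true <|
    forceN (A - K * K) fun T2 =>
    forceN (T1 / (π * (Q - 1))) fun u =>
    Nat.blt (T2 + (Q - 1) * (π * π) * (u * (u + 1))) (π * (2 * u + 1) * T1)) true

/-- Sylow test for a prime `p` not dividing `x`. -/
def ndTest (x T v δ p : ℕ) : Bool :=
  forceN (Nat.gcd v (p ^ 40)) fun q =>
  forceN ((x * T + δ * (q - 1)) / q) fun K =>
  forceN (v / q) fun Q =>
  forceN (δ / Nat.gcd δ q) fun π => killK T Q K π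

/-- Trial division. -/
def isPr (p : ℕ) : Bool := and (Nat.ble 2 p) <|
  forceN (p - 2) fun N => allB N fun i => not (Nat.beq (p % (i + 2)) 0)

/-- Search for a prime `p` dividing `v`, coprime to `x`, which passes the test. -/
def ndSearch (x T v δ : ℕ) (fuel : ℕ) : ℕ → Bool :=
  Nat.rec (fun _ => false)
    (fun _ ih p => cond (and (Nat.beq (v % p) 0) (and (Nat.beq (Nat.gcd p x) 1)
      (and (ndTest x T v δ p) (isPr p)))) true (forceN (p + 1) ih)) fuel

/-- Test all possible weights for a subgroup of index `P`. -/
def genTest (x T v δ P : ℕ) : Bool :=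
  and (Nat.beq (v % P) 0) <|
  forceN (v / P) fun Q =>
  forceN (δ / Nat.gcd δ P) fun π =>
  forceN (Q * T % π) fun κ =>
  forceN (x * T) fun xT =>
  allB ((xT + δ * (P - 1)) / P / π + 1) fun c =>
    forceN (κ + π * c) fun K =>
    cond (Nat.blt (P * K) xT) true <|
    cond (Nat.beq ((P * K - xT) % δ) 0)
      (cond (Nat.blt K T) true (killK T Q K π)) true

/-- Index hints `(s, α, P)` for the exceptional cases. -/
def hints : List (ℕ × ℕ × ℕ) :=
  [
   (29, 5, 81), (44, 8, 5), (89, 9, 625), (119, 14, 972),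
   (175, 15, 11), (305, 17, 4096), (329, 21, 2560), (560, 32, 4131),
   (781, 33, 5888), (1121, 33, 16384), (1043, 35, 29), (279, 39, 4375),
   (1325, 50, 9477), (230, 65, 567), (4289, 65, 14641), (839, 69, 3125),
   (3289, 69, 24064), (5921, 93, 43008), (455, 95, 729), (8899, 99, 89),
   (944, 104, 81), (5564, 104, 38637), (16769, 129, 28561), (13489, 141, 97280),
   (4679, 143, 327680), (373, 153, 512), (12719, 158, 87480), (20459, 164, 484375),
   (25549, 174, 1226911), (3023, 188, 67228), (699, 195, 10240), (2375, 215, 1408),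
   (8139, 219, 115625), (66305, 257, 1048576), (54625, 285, 391168), (879, 319, 3125),
   (51680, 320, 352107), (98819, 323, 9994240), (90383, 335, 196101), (5519, 344, 156250),
   (97409, 381, 696320), (5004, 384, 325), (7919, 395, 59049), (116885, 482, 793881),
   (263681, 513, 4194304), (2090, 560, 9963), (219841, 573, 1568768), (293909, 605, 636417),
   (9359, 623, 142805), (22310, 665, 1318761), (17159, 714, 644204), (50504, 776, 1092455),
   (688169, 869, 202496), (16064, 944, 10625), (469964, 968, 3182085)]

/-- Triples not excluded by the checker, as `(x, n, α)`. -/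
def exceptions : List (ℕ × ℕ × ℕ) :=
  [(6, 1, 2), (12, 2, 3), (40, 1, 15), (273, 1, 104), (2296, 2, 615), (1870, 1, 714)]

def leafKill (x n α v δ : ℕ) : Bool :=
  forceN (n * x) fun T =>
  cond (or (Nat.beq (x ^ 40 % v) 0) (and (Nat.beq α 195) (Nat.beq x 700)))
    (or (exceptions.any fun z => and (Nat.beq z.1 x) (and (Nat.beq z.2.1 n) (Nat.beq z.2.2 α)))
      (hints.any fun z => and (Nat.beq (z.1 + 1) x)
        (and (Nat.beq z.2.1 α) (genTest x T v δ z.2.2))))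
    (ndSearch x T v δ 3200 2)

def leaf (x n α : ℕ) : Bool :=
  forceN (x * ((x - 1) * (n * x - 1) + α)) fun w =>
  cond (Nat.beq (w % α) 0) (
    forceN (w / α) fun v =>
    forceN ((n + 1) * x - (α + 1)) fun δ =>
    cond (Nat.beq (v % δ) 0) (leafKill x n α v δ) true) true

/-- The full enumeration. -/
def slice (β : ℕ) : Bool :=
    allB (1001 / β) fun c₀ =>
    forceN (c₀ + 1) fun c =>
    allB ((1001 / β - β) / c - 1) fun y₀ =>
    forceN (y₀ + 1) fun y =>
    forceN (β + c * y) fun x' =>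
    allB ((1001 / β - c) / x') fun b₀ =>
    forceN (b₀ + 1) fun b =>
    forceN (b * x' + c) fun z =>
    allB (1001 / (β * z)) fun a₀ =>
    forceN ((a₀ + 1) * z) fun d =>
    forceN (d * x') fun x =>
    forceN (b * y) fun n =>
    forceN (β * d - 1) fun α => leaf x n α


/-! ### Characters and counting -/

open Finset in
lemma rat_int {z : ℂ} (hz : IsIntegral ℤ z) (q : ℚ) (hq : z = q) : ∃ n : ℤ, z = n := by
  have h1 : IsIntegral ℤ q := by
    have : IsIntegral ℤ (algebraMap ℚ ℂ q) := by simpa [hq] using hz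
    exact (isIntegral_algebraMap_iff (algebraMap ℚ ℂ).injective).1 this
  obtain ⟨n, hn⟩ := IsIntegrallyClosed.isIntegral_iff.1 h1
  refine ⟨n, ?_⟩
  rw [hq, ← hn]; simp

lemma char_pow_card {A : Type*} [AddCommGroup A] [Fintype A] (χ : AddChar A ℂ) (a : A) :
    χ a ^ Fintype.card A = 1 := by
  rw [← AddChar.map_nsmul_eq_pow]; simp

lemma char_integral {A : Type*} [AddCommGroup A] [Fintype A] (χ : AddChar A ℂ) (a : A) :
    IsIntegral ℤ (χ a) := by
  refine IsIntegral.of_pow (n := Fintype.card A) Fintype.card_pos ?_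
  rw [char_pow_card]; exact isIntegral_one

lemma char_conj {A : Type*} [AddCommGroup A] [Fintype A] (χ : AddChar A ℂ) (a : A) :
    (starRingEnd ℂ) (χ a) = χ (-a) := by
  exact (AddChar.map_neg_eq_conj χ a).symm

/-- If a finite set is partitioned in classes of size `m`, then `m` divides its size. -/
lemma dvd_card_of_classes {ι : Type*} [DecidableEq ι] (S : Finset ι) (cls : ι → Finset ι) (m : ℕ)
    (h1 : ∀ x ∈ S, x ∈ cls x) (h2 : ∀ x ∈ S, cls x ⊆ S)
    (h3 : ∀ x ∈ S, ∀ y ∈ cls x, cls y = cls x) (h4 : ∀ x ∈ S, (cls x).card = m) : m ∣ S.card := by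
  rw [Finset.card_eq_sum_card_image cls S]
  refine Finset.dvd_sum fun c hc => ?_
  obtain ⟨x, hx, rfl⟩ := Finset.mem_image.1 hc
  have : (S.filter fun y => cls y = cls x) = cls x := by
    ext y
    simp only [Finset.mem_filter]
    constructor
    · rintro ⟨hy, he⟩; rw [← he]; exact h1 y hy
    · intro hy; exact ⟨h2 x hx hy, h3 x hx y hy⟩
  rw [this, h4 x hx]

universe w
/-- A finite abelian group has subgroups of every order dividing the group order. -/
lemma exists_addSubgroup_card : ∀ (n : ℕ) (A : Type w) [AddCommGroup A] [Finite A],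
    n ∣ Nat.card A → ∃ H : AddSubgroup A, Nat.card H = n := by
  intro n
  induction n using Nat.strong_induction_on with
  | _ n ih =>
    intro A _ _ hn
    by_cases h1 : n = 1
    · exact ⟨⊥, by simp [h1]⟩
    have hn0 : n ≠ 0 := by
      rintro rfl
      have := Nat.card_pos (α := A)
      simp at hn; omega
    obtain ⟨p, hp, m, rfl⟩ := Nat.exists_prime_and_dvd h1
    have := Fact.mk hp
    have hpA : p ∣ Nat.card A := (Dvd.intro _ rfl).trans hn
    obtain ⟨g, hg⟩ := exists_prime_addOrderOf_dvd_card' p hpA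
    let Z := AddSubgroup.zmultiples g
    have hZ : Nat.card Z = p := by rw [Nat.card_zmultiples, hg]
    have hq : Nat.card A = Nat.card (A ⧸ Z) * p := by
      rw [AddSubgroup.card_eq_card_quotient_mul_card_addSubgroup Z, hZ]
    have hm : m ∣ Nat.card (A ⧸ Z) := by
      rw [hq, mul_comm] at hn
      exact Nat.dvd_of_mul_dvd_mul_right hp.pos hn
    have hm0 : 0 < m := Nat.pos_of_ne_zero (by rintro rfl; simp at hn0)
    obtain ⟨H, hH⟩ := ih m (by nlinarith [hp.two_le]) (A ⧸ Z) hm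
    refine ⟨H.comap (QuotientAddGroup.mk' Z), ?_⟩
    have h := AddSubgroup.index_comap_of_surjective H
      (f := QuotientAddGroup.mk' Z) (QuotientAddGroup.mk'_surjective Z)
    have e1 := AddSubgroup.card_mul_index H
    have e2 := AddSubgroup.card_mul_index (H.comap (QuotientAddGroup.mk' Z))
    have hpos : 0 < H.index := Nat.pos_of_ne_zero AddSubgroup.index_ne_zero_of_finite
    rw [h, hq, ← e1, hH] at e2
    exact Nat.eq_of_mul_eq_mul_right hpos (by rw [e2]; ring)


/-- The characters trivial on `H`. -/
noncomputable def perp {A : Type*} [AddCommGroup A] [Fintype A] (H : AddSubgroup A) :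
    Finset (AddChar A ℂ) :=
  open Classical in Finset.univ.filter fun χ => ∀ h ∈ H, χ h = 1

lemma mem_perp {A : Type*} [AddCommGroup A] [Fintype A] {H : AddSubgroup A} {χ : AddChar A ℂ} :
    χ ∈ perp H ↔ ∀ h ∈ H, χ h = 1 := by
  simp [perp]

open Classical in
lemma sum_subgroup {A : Type*} [AddCommGroup A] [Fintype A] (H : AddSubgroup A)
    (χ : AddChar A ℂ) : ∑ h : H, χ h = if χ ∈ perp H then (Nat.card H : ℂ) else 0 := by
  have h := AddChar.sum_eq_ite (χ.compAddMonoidHom H.subtype)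
  have e : (χ.compAddMonoidHom H.subtype = 0) ↔ χ ∈ perp H := by
    rw [AddChar.eq_zero_iff, mem_perp]; simp
  simp only [AddChar.compAddMonoidHom_apply, AddSubgroup.subtype_apply] at h
  rw [h, Nat.card_eq_fintype_card]
  simp only [e]

open Classical in
lemma sum_perp {A : Type*} [AddCommGroup A] [Fintype A] (H : AddSubgroup A) (P : ℕ)
    (hP : P * Nat.card H = Fintype.card A) (g : A) :
    ∑ ψ ∈ perp H, ψ g = if g ∈ H then (P : ℂ) else 0 := by
  have hH : (Nat.card H : ℂ) ≠ 0 := by exact_mod_cast Nat.card_pos.ne'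
  have h1 : (Nat.card H : ℂ) * ∑ ψ ∈ perp H, ψ g = ∑ ψ : AddChar A ℂ, ∑ h : H, ψ (h + g) := by
    have : ∀ ψ : AddChar A ℂ, ∑ h : H, ψ (h + g) =
        if ψ ∈ perp H then (Nat.card H : ℂ) * ψ g else 0 := by
      intro ψ
      simp only [AddChar.map_add_eq_mul]
      rw [← Finset.sum_mul, sum_subgroup]; split_ifs <;> simp
    simp only [this]
    rw [Finset.mul_sum, ← Finset.sum_filter]
    congr 1; ext; simp
  rw [Finset.sum_comm] at h1
  simp only [AddChar.sum_apply_eq_ite] at h1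
  have h2 : ∑ h : H, (if (h : A) + g = 0 then (Fintype.card A : ℂ) else 0)
      = if g ∈ H then (Fintype.card A : ℂ) else 0 := by
    split_ifs with hg
    · rw [Finset.sum_eq_single (⟨-g, H.neg_mem hg⟩ : H)]
      · simp
      · intro b _ hb
        rw [if_neg]
        intro h0
        apply hb
        ext; exact eq_neg_of_add_eq_zero_left h0
      · simp
    · apply Finset.sum_eq_zero
      intro h _
      rw [if_neg]
      intro h0
      apply hg
      rw [← neg_eq_of_add_eq_zero_right h0]
      exact H.neg_mem h.2
  rw [h2, ← hP] at h1
  apply mul_left_cancel₀ hH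
  rw [h1]
  split_ifs <;> push_cast <;> ring

lemma card_perp {A : Type*} [AddCommGroup A] [Fintype A] (H : AddSubgroup A) (P : ℕ)
    (hP : P * Nat.card H = Fintype.card A) : (perp H).card = P := by
  have h := sum_perp H P hP 0
  simp at h
  exact_mod_cast h

/-- Fourier transform of an integer valued function. -/
noncomputable def hat {A : Type*} [AddCommGroup A] [Fintype A] (r : A → ℕ) (χ : AddChar A ℂ) : ℂ :=
  ∑ a, (r a : ℂ) * χ a

/-- The spectral data extracted from the geometry: `T = t+1`, `x = s+1`. -/
structure Spec {A : Type*} [AddCommGroup A] [Fintype A] (r : A → ℕ) (x T δ : ℕ) : Prop where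
  zero : r 0 = T
  le_one : ∀ a, a ≠ 0 → r a ≤ 1
  total : ∑ a, r a = x * T
  pos : 0 < δ
  two : ∀ χ : AddChar A ℂ, χ ≠ 0 → hat r χ = 0 ∨ hat r χ = δ
  nd : ∀ (p b : ℕ) (χ : AddChar A ℂ), p.Prime → ¬ p ∣ x → χ ≠ 0 → (∀ a, χ a ^ p ^ b = 1) →
    hat r χ = δ

/-- Fourier transform of the restriction to a subgroup. -/
noncomputable def hatH {A : Type*} [AddCommGroup A] [Fintype A] (r : A → ℕ) (H : AddSubgroup A)
    (χ : AddChar A ℂ) : ℂ :=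
  open Classical in ∑ h : H, (r h : ℂ) * χ h

open Classical in
lemma hatH_eq {A : Type*} [AddCommGroup A] [Fintype A] (r : A → ℕ) (H : AddSubgroup A) (P : ℕ)
    (hP : P * Nat.card H = Fintype.card A) (χ : AddChar A ℂ) :
    P * hatH r H χ = ∑ ψ ∈ perp H, hat r (χ + ψ) := by
  simp only [hat, AddChar.add_apply]
  rw [Finset.sum_comm]
  have : ∀ a : A, ∑ ψ ∈ perp H, (r a : ℂ) * (χ a * ψ a) =
      if a ∈ H then (P : ℂ) * (r a * χ a) else 0 := by
    intro a
    have : ∀ ψ : AddChar A ℂ, (r a : ℂ) * (χ a * ψ a) = (r a * χ a) * ψ a := by intro; ring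
    simp only [this]
    rw [← Finset.mul_sum, sum_perp H P hP]
    split_ifs <;> ring
  simp only [this]
  rw [← Finset.sum_filter, hatH, Finset.mul_sum]
  exact (Finset.sum_subtype (p := (· ∈ H)) _ (by simp) (fun a => (P : ℂ) * (r a * χ a))).symm

lemma hatH_integral {A : Type*} [AddCommGroup A] [Fintype A] (r : A → ℕ) (H : AddSubgroup A)
    (χ : AddChar A ℂ) : IsIntegral ℤ (hatH r H χ) := by
  refine IsIntegral.sum _ fun h _ => IsIntegral.mul ?_ (char_integral χ _)
  exact_mod_cast isIntegral_algebraMap (R := ℤ) (A := ℂ) (x := (r h : ℤ))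

/-- Number of characters in the coset of the big eigenvalue. -/
noncomputable def cnt {A : Type*} [AddCommGroup A] [Fintype A] (r : A → ℕ) (δ : ℕ)
    (S : Finset (AddChar A ℂ)) (χ : AddChar A ℂ) : ℕ :=
  open Classical in (S.filter fun ψ => hat r (χ + ψ) = δ).card

open Classical in
lemma sum_two {A : Type*} [AddCommGroup A] [Fintype A] {r : A → ℕ} {x T δ : ℕ}
    (hr : Spec r x T δ) (S : Finset (AddChar A ℂ)) (χ : AddChar A ℂ) (h : ∀ ψ ∈ S, χ + ψ ≠ 0) :
    ∑ ψ ∈ S, hat r (χ + ψ) = (δ : ℂ) * cnt r δ S χ := by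
  have : ∀ ψ ∈ S, hat r (χ + ψ) = if hat r (χ + ψ) = δ then (δ : ℂ) else 0 := by
    intro ψ hψ
    rcases hr.two _ (h ψ hψ) with h | h
    · rw [h]; split_ifs with h'
      · exact h'
      · rfl
    · rw [h]; simp
  rw [Finset.sum_congr rfl this, ← Finset.sum_filter, Finset.sum_const, cnt, nsmul_eq_mul, mul_comm]


lemma pi_dvd {δ P n : ℕ} (hP0 : 0 < P) (h : δ ∣ P * n) : δ / Nat.gcd δ P ∣ n := by
  obtain ⟨j, h4⟩ := h
  have hg : 0 < Nat.gcd δ P := Nat.gcd_pos_of_pos_right _ hP0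
  have hco := Nat.coprime_div_gcd_div_gcd hg
  refine hco.dvd_of_dvd_mul_left (m := P / Nat.gcd δ P) ⟨j, ?_⟩
  apply Nat.eq_of_mul_eq_mul_left hg
  rw [← mul_assoc, ← mul_assoc, Nat.mul_div_cancel' (Nat.gcd_dvd_right _ _),
    Nat.mul_div_cancel' (Nat.gcd_dvd_left _ _), h4]

/-- Fourier inversion. -/
lemma hat_inv {A : Type*} [AddCommGroup A] [Fintype A] (r : A → ℕ) (g : A) :
    ∑ χ : AddChar A ℂ, hat r χ * χ (-g) = Fintype.card A * r g := by
  classical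
  simp only [hat, Finset.sum_mul]
  rw [Finset.sum_comm]
  have : ∀ a : A, ∑ χ : AddChar A ℂ, (r a : ℂ) * χ a * χ (-g) =
      if a = g then (Fintype.card A : ℂ) * r g else 0 := by
    intro a
    simp only [mul_assoc, ← AddChar.map_add_eq_mul]
    rw [← Finset.mul_sum, AddChar.sum_apply_eq_ite]
    by_cases h : a = g
    · simp [h, mul_comm]
    · rw [if_neg (by rwa [← sub_eq_add_neg, sub_eq_zero]), if_neg h, mul_zero]
  simp [this]

lemma hat_zero {A : Type*} [AddCommGroup A] [Fintype A] {r : A → ℕ} {x T δ : ℕ}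
    (hr : Spec r x T δ) : hat r 0 = (x * T : ℕ) := by
  rw [← hr.total, hat]; push_cast; simp

lemma inv_eq {A : Type*} [AddCommGroup A] [Fintype A] {r : A → ℕ} {x T δ : ℕ}
    (hr : Spec r x T δ) (g : A) :
    ∃ N : ℤ, (Fintype.card A : ℤ) * r g = x * T + δ * N := by
  classical
  have h := hat_inv r g
  rw [← Finset.add_sum_erase _ _ (Finset.mem_univ 0), hat_zero hr, AddChar.zero_apply,
    mul_one] at h
  set z := ∑ χ ∈ (Finset.univ.erase (0 : AddChar A ℂ)).filter (fun χ => hat r χ = δ), χ (-g) with hz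
  have h2 : ∑ χ ∈ Finset.univ.erase (0 : AddChar A ℂ), hat r χ * χ (-g) = δ * z := by
    rw [hz, Finset.mul_sum, Finset.sum_filter]
    refine Finset.sum_congr rfl fun χ hχ => ?_
    rcases hr.two χ (Finset.ne_of_mem_erase hχ) with h | h
    · rw [h]; split_ifs with h'
      · rw [h']
      · simp
    · rw [h]; simp
  rw [h2] at h
  have hδ : (δ : ℂ) ≠ 0 := by exact_mod_cast hr.pos.ne'
  have hq : z = (((Fintype.card A * r g - x * T) / δ : ℚ) : ℂ) := by
    push_cast
    rw [eq_div_iff hδ, ← h]; push_cast; ring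
  obtain ⟨N, hN⟩ := rat_int (IsIntegral.sum _ fun χ _ => char_integral χ _) _ hq
  rw [← hz] at hN
  rw [hN] at h
  exact ⟨N, by exact_mod_cast h.symm⟩

lemma total_eq {A : Type*} [AddCommGroup A] [Fintype A] {r : A → ℕ} {x T δ : ℕ}
    (hr : Spec r x T δ) : ∃ N : ℕ, Fintype.card A * T = x * T + δ * N := by
  classical
  have h := hat_inv r 0
  simp only [neg_zero, AddChar.map_zero_eq_one, mul_one] at h
  rw [← Finset.add_sum_erase _ _ (Finset.mem_univ 0), hat_zero hr] at h
  have h2 := sum_two hr (Finset.univ.erase (0 : AddChar A ℂ)) 0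
    (fun ψ hψ => by rw [zero_add]; exact Finset.ne_of_mem_erase hψ)
  simp only [zero_add] at h2
  rw [h2, hr.zero] at h
  exact ⟨_, by exact_mod_cast h.symm⟩

/-- The multiples of `π` arising as eigenvalues of the restriction to `H`. -/
lemma hatH_nat {A : Type*} [AddCommGroup A] [Fintype A] {r : A → ℕ} {x T δ : ℕ}
    (hr : Spec r x T δ) (H : AddSubgroup A) (P : ℕ) (hP : P * Nat.card H = Fintype.card A)
    (χ : AddChar A ℂ) (hχ : χ ∉ perp H) :
    ∃ m : ℕ, hatH r H χ = m ∧ δ / Nat.gcd δ P ∣ m := by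
  have hP0 : 0 < P := Nat.pos_of_ne_zero (by
    rintro rfl; have := Fintype.card_pos (α := A); omega)
  have h1 := hatH_eq r H P hP χ
  rw [sum_two hr _ χ] at h1
  swap
  · intro ψ hψ h0
    apply hχ
    rw [mem_perp] at hψ ⊢
    intro h hh
    have : (χ + ψ) h = 1 := by rw [h0]; rfl
    rw [AddChar.add_apply, hψ h hh, mul_one] at this
    exact this
  set j := cnt r δ (perp H) χ with hj
  have hPc : (P : ℂ) ≠ 0 := by exact_mod_cast hP0.ne'
  have h2 : hatH r H χ = ((δ * j / P : ℚ) : ℂ) := by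
    push_cast; rw [eq_div_iff hPc, mul_comm]; exact h1
  obtain ⟨n, hn⟩ := rat_int (hatH_integral r H χ) _ h2
  rw [hn] at h1
  have h3 : (P : ℤ) * n = δ * j := by exact_mod_cast h1
  have hn0 : 0 ≤ n := by
    by_contra h
    push Not at h
    have : (P : ℤ) * n < 0 := mul_neg_of_pos_of_neg (by exact_mod_cast hP0) h
    have : (0 : ℤ) ≤ δ * j := by positivity
    omega
  lift n to ℕ using hn0
  refine ⟨n, by rw [hn]; simp, ?_⟩
  have h4 : P * n = δ * j := by exact_mod_cast h3
  exact pi_dvd hP0 ⟨j, h4⟩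

open Classical in
lemma hatH_sum {A : Type*} [AddCommGroup A] [Fintype A] (r : A → ℕ) (H : AddSubgroup A) :
    ∑ χ : AddChar A ℂ, hatH r H χ = Fintype.card A * r 0 := by
  simp only [hatH]
  rw [Finset.sum_comm]
  simp only [← Finset.mul_sum, AddChar.sum_apply_eq_ite]
  rw [Finset.sum_eq_single (0 : H)]
  · simp [mul_comm]
  · intro b _ hb; simp [hb]
  · simp

open Classical in
lemma hatH_sum_sq {A : Type*} [AddCommGroup A] [Fintype A] (r : A → ℕ) (H : AddSubgroup A) :
    ∑ χ : AddChar A ℂ, hatH r H χ * (starRingEnd ℂ) (hatH r H χ)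
      = Fintype.card A * ∑ h : H, (r h : ℂ) ^ 2 := by
  have h1 : ∀ χ : AddChar A ℂ, hatH r H χ * (starRingEnd ℂ) (hatH r H χ) =
      ∑ h : H, ∑ k : H, (r h : ℂ) * r k * χ (h - k) := by
    intro χ
    simp only [hatH]
    rw [map_sum, Finset.sum_mul_sum]
    refine Finset.sum_congr rfl fun h _ => Finset.sum_congr rfl fun k _ => ?_
    rw [map_mul, char_conj, sub_eq_add_neg, AddChar.map_add_eq_mul]
    simp
    ring
  simp only [h1]
  rw [Finset.sum_comm, Finset.mul_sum]
  refine Finset.sum_congr rfl fun h _ => ?_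
  rw [Finset.sum_comm]
  simp only [← Finset.mul_sum, AddChar.sum_apply_eq_ite]
  rw [Finset.sum_eq_single h]
  · simp; ring
  · intro b _ hb
    rw [if_neg]; · simp
    intro h0
    exact hb (Subtype.ext (sub_eq_zero.1 h0).symm)
  · simp

/-- Numerical conditions for a subgroup of index `P` and order `Q`. -/
structure Cond (x T δ P Q K a : ℕ) : Prop where
  eq : P * K = x * T + δ * a
  lt : a < P
  ge : T ≤ K
  le : K ≤ Q * T
  dvd : δ / Nat.gcd δ P ∣ Q * T - K
  le2 : K * K ≤ Q * (T * T + K - T)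
  ineq : ∀ u : ℕ, (δ / Nat.gcd δ P) * (2 * u + 1) * (Q * T - K) ≤
    (Q * (T * T + K - T) - K * K) +
      (Q - 1) * ((δ / Nat.gcd δ P) * (δ / Nat.gcd δ P)) * (u * (u + 1))

open Classical in
/-- The characters of `H^⊥` with the big eigenvalue. -/
noncomputable def big {A : Type*} [AddCommGroup A] [Fintype A] (r : A → ℕ) (δ : ℕ)
    (H : AddSubgroup A) : Finset (AddChar A ℂ) :=
  ((perp H).erase 0).filter fun ψ => hat r ψ = δ

open Classical in
lemma cond_of_spec {A : Type*} [AddCommGroup A] [Fintype A] {r : A → ℕ} {x T δ : ℕ}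
    (hr : Spec r x T δ) (H : AddSubgroup A) (P Q : ℕ) (hQ : Nat.card H = Q)
    (hP : P * Q = Fintype.card A) :
    ∃ K, Cond x T δ P Q K (big r δ H).card := by
  have hP' : P * Nat.card H = Fintype.card A := by rw [hQ, hP]
  have hA := Fintype.card_pos (α := A)
  have hP0 : 0 < P := Nat.pos_of_ne_zero (by rintro rfl; simp at hP; omega)
  have hQ0 : 0 < Q := Nat.pos_of_ne_zero (by rintro rfl; simp at hP; omega)
  set K := ∑ h : H, r h with hK
  set π := δ / Nat.gcd δ P with hπ
  have hcard := card_perp H P hP'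
  have hzmem : (0 : AddChar A ℂ) ∈ perp H := by rw [mem_perp]; intros; rfl
  -- values on perp
  have hKχ : ∀ χ ∈ perp H, hatH r H χ = K := by
    intro χ hχ
    rw [mem_perp] at hχ
    rw [hatH, hK]; push_cast
    refine Finset.sum_congr rfl fun h _ => ?_
    rw [hχ h h.2, mul_one]
  -- (1)
  have heq : P * K = x * T + δ * (big r δ H).card := by
    have h1 := hatH_eq r H P hP' 0
    rw [hKχ 0 hzmem, ← Finset.add_sum_erase _ _ hzmem, sum_two hr] at h1
    swap
    · intro ψ hψ; rw [zero_add]; exact Finset.ne_of_mem_erase hψ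
    have h2 : hat r (0 + 0) = (x * T : ℕ) := by
      rw [← hr.total, hat]; push_cast; simp
    rw [h2] at h1
    simp only [cnt, zero_add] at h1
    exact_mod_cast h1
  have halt : (big r δ H).card < P := by
    have : (big r δ H).card ≤ ((perp H).erase 0).card := Finset.card_filter_le _ _
    rw [Finset.card_erase_of_mem hzmem, hcard] at this
    omega
  -- natural values
  have hm : ∀ χ : AddChar A ℂ, ∃ m : ℕ, hatH r H χ = m ∧ (χ ∉ perp H → π ∣ m) := by
    intro χ
    by_cases hχ : χ ∈ perp H
    · exact ⟨K, hKχ χ hχ, fun h => absurd hχ h⟩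
    · obtain ⟨m, h1, h2⟩ := hatH_nat hr H P hP' χ hχ
      exact ⟨m, h1, fun _ => h2⟩
  choose m hm1 hm2 using hm
  have hmK : ∀ χ ∈ perp H, m χ = K := by
    intro χ hχ
    have := hKχ χ hχ
    rw [hm1] at this
    exact_mod_cast this
  have hs1 : ∑ χ, m χ = P * (Q * T) := by
    have := hatH_sum r H
    simp only [hm1] at this
    rw [hr.zero] at this
    rw [← mul_assoc, hP]
    exact_mod_cast this
  have hsq : ∑ h : H, (r h) ^ 2 + T = T * T + K := by
    rw [hK, ← Finset.add_sum_erase Finset.univ (fun h : H => (r h) ^ 2) (Finset.mem_univ 0),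
      ← Finset.add_sum_erase Finset.univ (fun h : H => (r h)) (Finset.mem_univ 0)]
    have : ∑ h ∈ Finset.univ.erase (0 : H), (r h) ^ 2 = ∑ h ∈ Finset.univ.erase (0 : H), r h := by
      refine Finset.sum_congr rfl fun h hh => ?_
      have := hr.le_one h (by
        have := Finset.ne_of_mem_erase hh
        intro h0; exact this (Subtype.ext h0))
      interval_cases r h <;> simp
    rw [this]
    simp only [ZeroMemClass.coe_zero, hr.zero]
    ring
  have hKT : T ≤ K := by
    rw [hK, ← hr.zero]
    exact Finset.single_le_sum (f := fun h : H => r h) (fun _ _ => Nat.zero_le _)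
      (Finset.mem_univ 0)
  have hs2 : ∑ χ, (m χ) ^ 2 = P * (Q * (T * T + K - T)) := by
    have := hatH_sum_sq r H
    simp only [hm1] at this
    have e : T * T + K - T = ∑ h : H, (r h) ^ 2 := by omega
    rw [e, ← mul_assoc, hP]
    simp only [map_natCast] at this
    have h2 : ∀ χ : AddChar A ℂ, (m χ : ℂ) * m χ = ((m χ ^ 2 : ℕ) : ℂ) := by
      intro χ; push_cast; ring
    simp only [h2] at this
    exact_mod_cast this
  -- sums off perp
  have hsplit1 : P * K + ∑ χ ∈ (perp H)ᶜ, m χ = P * (Q * T) := by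
    rw [← hs1, ← Finset.sum_add_sum_compl (perp H), Finset.sum_congr rfl hmK, Finset.sum_const,
      hcard, smul_eq_mul]
  have hsplit2 : P * (K * K) + ∑ χ ∈ (perp H)ᶜ, m χ ^ 2 = P * (Q * (T * T + K - T)) := by
    rw [← hs2, ← Finset.sum_add_sum_compl (perp H),
      Finset.sum_congr rfl (fun χ hχ => by rw [hmK χ hχ] : ∀ χ ∈ perp H, m χ ^ 2 = K ^ 2),
      Finset.sum_const, hcard, smul_eq_mul, pow_two]
  have hle : K ≤ Q * T := Nat.le_of_mul_le_mul_left (by omega : P * K ≤ P * (Q * T)) hP0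
  have hle2 : K * K ≤ Q * (T * T + K - T) :=
    Nat.le_of_mul_le_mul_left (by omega : P * (K * K) ≤ _) hP0
  have hS1 : ∑ χ ∈ (perp H)ᶜ, m χ = P * (Q * T - K) := by
    rw [Nat.mul_sub]; omega
  have hS2 : ∑ χ ∈ (perp H)ᶜ, m χ ^ 2 = P * (Q * (T * T + K - T) - K * K) := by
    rw [Nat.mul_sub]; omega
  have hcompl : ((perp H)ᶜ).card = P * (Q - 1) := by
    rw [Finset.card_compl, hcard, AddChar.card_eq, ← hP, Nat.mul_sub, mul_one]
  refine ⟨K, heq, halt, hKT, hle, ?_, hle2, ?_⟩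
  · obtain ⟨N, hN⟩ := total_eq hr
    have h1 : P * (Q * T - K) + δ * (big r δ H).card = δ * N := by
      rw [Nat.mul_sub, ← mul_assoc, hP, hN]
      have := Nat.mul_le_mul_left P hle
      rw [← mul_assoc, hP, hN] at this
      omega
    have h2 : δ ∣ P * (Q * T - K) :=
      (Nat.dvd_add_left (Dvd.intro _ rfl)).1 (h1 ▸ Dvd.intro _ rfl)
    exact pi_dvd hP0 h2
  · intro u
    have key : ∀ χ ∈ (perp H)ᶜ, π * (2 * u + 1) * m χ ≤ m χ ^ 2 + π * π * (u * (u + 1)) := by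
      intro χ hχ
      obtain ⟨c, hc⟩ := hm2 χ (Finset.mem_compl.1 hχ)
      rw [hc]
      have : (2 * u + 1) * c ≤ c * c + u * (u + 1) := by
        rcases le_or_gt c u with h | h
        · obtain ⟨e, rfl⟩ := Nat.exists_eq_add_of_le h
          have : c * c + (c + e) * (c + e + 1) = (2 * (c + e) + 1) * c + e * (e + 1) := by ring
          omega
        · obtain ⟨e, rfl⟩ := Nat.exists_eq_add_of_lt h
          have : (u + e + 1) * (u + e + 1) + u * (u + 1)
            = (2 * u + 1) * (u + e + 1) + e * (e + 1) := by ring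
          omega
      calc π * (2 * u + 1) * (π * c) = π * π * ((2 * u + 1) * c) := by ring
        _ ≤ π * π * (c * c + u * (u + 1)) := Nat.mul_le_mul_left _ this
        _ = _ := by ring
    have := Finset.sum_le_sum key
    rw [← Finset.mul_sum, Finset.sum_add_distrib, hS1, hS2, Finset.sum_const, hcompl,
      smul_eq_mul] at this
    refine Nat.le_of_mul_le_mul_left ?_ hP0
    calc _ = π * (2 * u + 1) * (P * (Q * T - K)) := by ring
      _ ≤ _ := this
      _ = _ := by ring


lemma perp_pow {A : Type*} [AddCommGroup A] [Fintype A] {H : AddSubgroup A} {P : ℕ}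
    (hP : P * Nat.card H = Fintype.card A) {ψ : AddChar A ℂ} (hψ : ψ ∈ perp H) (a : A) :
    ψ a ^ P = 1 := by
  have hi : H.index = P := by
    have h := AddSubgroup.index_mul_card H
    rw [Nat.card_eq_fintype_card (α := A), ← hP] at h
    exact Nat.eq_of_mul_eq_mul_right Nat.card_pos h
  rw [← AddChar.map_nsmul_eq_pow, ← hi]
  exact mem_perp.1 hψ _ (AddSubgroup.nsmul_index_mem H a)

open Polynomial in
/-- Galois invariance. -/
lemma hat_galois {A : Type*} [AddCommGroup A] [Fintype A] (r : A → ℕ) (δ n k : ℕ) (hn : 0 < n)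
    (hk : Nat.Coprime k n) (ψ : AddChar A ℂ) (hψ : ∀ a, ψ a ^ n = 1) (h : hat r ψ = δ) :
    hat r (k • ψ) = δ := by
  have hζ := Complex.isPrimitiveRoot_exp n hn.ne'
  set ζ := Complex.exp (2 * Real.pi * Complex.I / n) with hζd
  have : NeZero n := ⟨hn.ne'⟩
  have he : ∀ a, ∃ i, ψ a = ζ ^ i := fun a => by
    obtain ⟨i, _, hi⟩ := hζ.eq_pow_of_pow_eq_one (hψ a)
    exact ⟨i, hi.symm⟩
  choose e he using he
  let F : ℤ[X] := ∑ a, C (r a : ℤ) * X ^ e a - C (δ : ℤ)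
  have hF : ∀ z : ℂ, aeval z F = ∑ a, (r a : ℂ) * z ^ e a - δ := by
    intro z; simp [F]
  have h0 : aeval ζ F = 0 := by
    rw [hF, sub_eq_zero, ← h, hat]
    exact Finset.sum_congr rfl fun a _ => by rw [he]
  have hdvd : minpoly ℤ ζ ∣ F := minpoly.isIntegrallyClosed_dvd (hζ.isIntegral hn) h0
  rw [hζ.minpoly_eq_pow_coprime hk] at hdvd
  have h1 : aeval (ζ ^ k) F = 0 := by
    obtain ⟨q, hq⟩ := hdvd
    rw [hq, map_mul, minpoly.aeval, zero_mul]
  rw [hF, sub_eq_zero] at h1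
  rw [← h1, hat]
  refine Finset.sum_congr rfl fun a _ => ?_
  rw [AddChar.nsmul_apply, he, ← pow_mul, ← pow_mul, mul_comm (e a) k]

open Classical in
lemma big_eq_of_prime {A : Type*} [AddCommGroup A] [Fintype A] {r : A → ℕ} {x T δ : ℕ}
    (hr : Spec r x T δ) (H : AddSubgroup A) (P p b : ℕ)
    (hP : P * Nat.card H = Fintype.card A) (hp : p.Prime) (hpb : P = p ^ b) (hpx : ¬ p ∣ x) :
    (big r δ H).card = P - 1 := by
  have hzmem : (0 : AddChar A ℂ) ∈ perp H := by rw [mem_perp]; intros; rfl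
  have : big r δ H = (perp H).erase 0 := by
    refine Finset.filter_true_of_mem fun ψ hψ => ?_
    have h1 := Finset.mem_of_mem_erase hψ
    exact hr.nd p b ψ hp hpx (Finset.ne_of_mem_erase hψ) fun a => hpb ▸ perp_pow hP h1 a
  rw [this, Finset.card_erase_of_mem hzmem, card_perp H P hP]

open Classical in
lemma big_dvd {A : Type*} [AddCommGroup A] [Fintype A] {r : A → ℕ} {δ : ℕ}
    (H : AddSubgroup A) (hP : 625 * Nat.card H = Fintype.card A) :
    4 ∣ (big r δ H).card := by
  have h625 : ∀ ψ ∈ big r δ H, (625 : ℕ) • ψ = 0 := by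
    intro ψ hψ
    have h1 := Finset.mem_of_mem_erase (Finset.mem_of_mem_filter _ hψ)
    ext a
    rw [AddChar.nsmul_apply, perp_pow hP h1]; rfl
  have hne : ∀ ψ ∈ big r δ H, ∀ j : ℕ, Nat.Coprime j 625 → j • ψ ≠ 0 := by
    intro ψ hψ j hj h0
    have h1 := addOrderOf_dvd_of_nsmul_eq_zero h0
    have h2 := addOrderOf_dvd_of_nsmul_eq_zero (h625 ψ hψ)
    have h3 := Nat.dvd_gcd h1 h2
    rw [hj.gcd_eq_one, Nat.dvd_one, AddMonoid.addOrderOf_eq_one_iff] at h3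
    exact Finset.ne_of_mem_erase (Finset.mem_of_mem_filter _ hψ) h3
  have hmem : ∀ ψ ∈ big r δ H, ∀ j : ℕ, Nat.Coprime j 625 → j • ψ ∈ big r δ H := by
    intro ψ hψ j hj
    have h1 := Finset.mem_of_mem_erase (Finset.mem_of_mem_filter _ hψ)
    have h2 : hat r ψ = δ := (Finset.mem_filter.1 hψ).2
    refine Finset.mem_filter.2 ⟨Finset.mem_erase.2 ⟨hne ψ hψ j hj, ?_⟩,
      hat_galois r δ 625 j (by norm_num) hj ψ (perp_pow hP h1) h2⟩
    rw [mem_perp] at h1 ⊢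
    intro h hh
    rw [AddChar.nsmul_apply, h1 h hh, one_pow]
  have hred : ∀ ψ ∈ big r δ H, ∀ i j : ℕ, i % 625 = j % 625 → i • ψ = j • ψ := by
    intro ψ hψ i j hij
    have h2 := addOrderOf_dvd_of_nsmul_eq_zero (h625 ψ hψ)
    exact nsmul_eq_nsmul_iff_modEq.2 (Nat.ModEq.of_dvd h2 hij)
  have hinj : ∀ ψ ∈ big r δ H, ∀ i j d : ℕ, (i + d) % 625 = j % 625 → Nat.Coprime d 625 →
      i • ψ ≠ j • ψ := by
    intro ψ hψ i j d hij hd h0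
    have h1 := hred ψ hψ _ _ hij
    rw [add_nsmul, ← h0] at h1
    exact hne ψ hψ d hd (by simpa using h1)
  refine dvd_card_of_classes _ (fun ψ => {1 • ψ, 182 • ψ, 624 • ψ, 443 • ψ}) 4 ?_ ?_ ?_ ?_
  · intro ψ _; simp
  · intro ψ hψ φ hφ
    simp only [Finset.mem_insert, Finset.mem_singleton] at hφ
    rcases hφ with rfl | rfl | rfl | rfl <;> exact hmem ψ hψ _ (by norm_num)
  · intro ψ hψ φ hφ
    simp only [Finset.mem_insert, Finset.mem_singleton] at hφ
    have e : ∀ i j k : ℕ, (j * i) % 625 = k % 625 → j • i • ψ = k • ψ := by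
      intro i j k h
      rw [← mul_nsmul', hred ψ hψ _ _ h]
    rcases hφ with rfl | rfl | rfl | rfl
    · rw [e 1 1 1 (by norm_num), e 1 182 182 (by norm_num), e 1 624 624 (by norm_num),
        e 1 443 443 (by norm_num)]
    · rw [e 182 1 182 (by norm_num), e 182 182 624 (by norm_num), e 182 624 443 (by norm_num),
        e 182 443 1 (by norm_num)]
      generalize 182 • ψ = A1
      generalize 624 • ψ = A2
      generalize 443 • ψ = A3
      generalize 1 • ψ = A4
      ext; simp only [Finset.mem_insert, Finset.mem_singleton]; tauto
    · rw [e 624 1 624 (by norm_num), e 624 182 443 (by norm_num), e 624 624 1 (by norm_num),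
        e 624 443 182 (by norm_num)]
      generalize 182 • ψ = A1
      generalize 624 • ψ = A2
      generalize 443 • ψ = A3
      generalize 1 • ψ = A4
      ext; simp only [Finset.mem_insert, Finset.mem_singleton]; tauto
    · rw [e 443 1 443 (by norm_num), e 443 182 1 (by norm_num), e 443 624 182 (by norm_num),
        e 443 443 624 (by norm_num)]
      generalize 182 • ψ = A1
      generalize 624 • ψ = A2
      generalize 443 • ψ = A3
      generalize 1 • ψ = A4
      ext; simp only [Finset.mem_insert, Finset.mem_singleton]; tauto
  · intro ψ hψ
    rw [Finset.card_insert_of_notMem, Finset.card_insert_of_notMem, Finset.card_insert_of_notMem,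
      Finset.card_singleton]
    · rw [Finset.mem_singleton]
      exact hinj ψ hψ _ _ 444 (by norm_num) (by norm_num)
    · simp only [Finset.mem_insert, Finset.mem_singleton, not_or]
      exact ⟨hinj ψ hψ _ _ 442 (by norm_num) (by norm_num),
        hinj ψ hψ _ _ 261 (by norm_num) (by norm_num)⟩
    · simp only [Finset.mem_insert, Finset.mem_singleton, not_or]
      exact ⟨hinj ψ hψ _ _ 181 (by norm_num) (by norm_num),
        hinj ψ hψ _ _ 623 (by norm_num) (by norm_num),
        hinj ψ hψ _ _ 442 (by norm_num) (by norm_num)⟩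

/-- The numerical facts used by the checker. -/
lemma spec_facts {A : Type*} [AddCommGroup A] [Fintype A] {r : A → ℕ} {x T δ : ℕ}
    (hr : Spec r x T δ) (P : ℕ) (hP : P ∣ Fintype.card A) :
    ∃ K a, Cond x T δ P (Fintype.card A / P) K a ∧
      (∀ p b, p.Prime → P = p ^ b → ¬ p ∣ x → a = P - 1) ∧ (P = 625 → 4 ∣ a) := by
  classical
  have hd : Fintype.card A / P ∣ Nat.card A := by
    rw [Nat.card_eq_fintype_card]; exact Nat.div_dvd_of_dvd hP
  obtain ⟨H, hH⟩ := exists_addSubgroup_card _ A hd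
  have hPQ : P * (Fintype.card A / P) = Fintype.card A := Nat.mul_div_cancel' hP
  obtain ⟨K, hK⟩ := cond_of_spec hr H P _ hH hPQ
  refine ⟨K, _, hK, ?_, ?_⟩
  · intro p b hp hb hx
    exact big_eq_of_prime hr H P p b (by rw [hH, hPQ]) hp hb hx
  · rintro rfl
    exact big_dvd H (by rw [hH, hPQ])


/-! ### From the geometry to the spectral data -/

lemma dvd_card_of_sum_zero {A : Type*} [AddCommGroup A] [Fintype A] (χ : AddChar A ℂ)
    (p b : ℕ) (hp : p.Prime) (hχ : ∀ a, χ a ^ p ^ b = 1) (S : Finset A)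
    (h0 : ∑ a ∈ S, χ a = 0) : p ∣ S.card := by
  have := Fact.mk hp
  let O := integralClosure ℤ ℂ
  have key : ∀ (n : ℕ) (w : O), (n : ℂ) = (p : ℂ) * (w : ℂ) → p ∣ n := by
    intro n w h
    have hp0 : (p : ℂ) ≠ 0 := by exact_mod_cast hp.ne_zero
    have hw : (w : ℂ) = ((n / p : ℚ) : ℂ) := by
      push_cast; rw [h]; field_simp
    obtain ⟨m, hm⟩ := rat_int w.2 _ hw
    rw [hm] at h
    have h' : (n : ℤ) = p * m := by exact_mod_cast h
    exact Int.natCast_dvd_natCast.1 ⟨m, h'⟩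
  have hnu : ((p : O)) ∈ nonunits O := by
    rintro ⟨u, hu⟩
    have h1 : (u : O) * ((u⁻¹ : Oˣ) : O) = 1 := Units.mul_inv u
    rw [hu] at h1
    have h2 := congrArg (fun z : O => (z : ℂ)) h1
    have h3 := key 1 _ (by push_cast at h2 ⊢; exact h2.symm)
    exact hp.one_lt.ne' (Nat.dvd_one.1 h3)
  have := CharP.quotient O p hnu
  let f : A → O := fun a => ⟨χ a, char_integral χ a⟩
  have hf0 : ∑ a ∈ S, f a = 0 := by
    apply Subtype.ext
    have : ((∑ a ∈ S, f a : O) : ℂ) = ∑ a ∈ S, χ a := by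
      rw [AddSubmonoidClass.coe_finsetSum]
    rw [this, h0]; rfl
  have hf1 : ∀ a, f a ^ p ^ b = 1 := by
    intro a; apply Subtype.ext; simpa [f] using hχ a
  let q := Ideal.Quotient.mk (Ideal.span ({(p : O)} : Set O))
  have h1 : (∑ a ∈ S, q (f a)) ^ p ^ b = ∑ a ∈ S, q (f a) ^ p ^ b :=
    sum_pow_char_pow p b S (fun a => q (f a))
  rw [← map_sum, hf0, map_zero, zero_pow (pow_pos hp.pos b).ne'] at h1
  have h2 : ∑ a ∈ S, q (f a) ^ p ^ b = q (S.card : O) := by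
    simp only [← map_pow, hf1, map_one]
    simp
  rw [h2] at h1
  have h3 := Ideal.Quotient.eq_zero_iff_mem.1 h1.symm
  obtain ⟨w, hw⟩ := Ideal.mem_span_singleton.1 h3
  have h4 := congrArg (fun z : O => (z : ℂ)) hw
  exact key S.card w (by push_cast at h4; exact h4)

/-- Number of lines through two points. -/
def lam {G : Type*} [DecidableEq G] (F : Finset (Finset G)) (x y : G) : ℕ :=
  (F.filter fun L => x ∈ L ∧ y ∈ L).card

/-- Finset version of the axioms. -/
structure PGF {G : Type*} [CommGroup G] [DecidableEq G] (F : Finset (Finset G)) (s t α : ℕ) :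
    Prop where
  card : ∀ L ∈ F, L.card = s + 1
  deg : ∀ x : G, (F.filter fun L => x ∈ L).card = t + 1
  inter : ∀ L ∈ F, ∀ M ∈ F, L ≠ M → (L ∩ M).card ≤ 1
  al : ∀ x : G, ∀ L ∈ F, x ∉ L → (F.filter fun M => x ∈ M ∧ ∃ y ∈ L, y ∈ M).card = α
  tr : ∀ g : G, ∀ L ∈ F, L.image (fun y => g * y) ∈ F

set_option linter.unusedSectionVars false
section PGFsec
variable {G : Type*} [CommGroup G] [Fintype G] [DecidableEq G] {F : Finset (Finset G)}
  {s t α : ℕ}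

lemma img_img (g h : G) (L : Finset G) :
    (L.image (fun y => h * y)).image (fun y => g * y) = L.image (fun y => (g * h) * y) := by
  rw [Finset.image_image]; congr 1; ext y; simp [mul_assoc]

lemma img_one (L : Finset G) : L.image (fun y => (1 : G) * y) = L := by simp

lemma lam_tr (h : PGF F s t α) (g x y : G) : lam F (g * x) (g * y) = lam F x y := by
  unfold lam
  refine Finset.card_nbij' (fun L => L.image (fun y => g⁻¹ * y)) (fun L => L.image (fun y => g * y))
    ?_ ?_ ?_ ?_
  · intro L hL
    simp only [Finset.coe_filter, Set.mem_ofPred_eq] at hL ⊢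
    exact ⟨h.tr _ _ hL.1, Finset.mem_image.2 ⟨_, hL.2.1, by simp⟩,
      Finset.mem_image.2 ⟨_, hL.2.2, by simp⟩⟩
  · intro L hL
    simp only [Finset.coe_filter, Set.mem_ofPred_eq] at hL ⊢
    exact ⟨h.tr _ _ hL.1, Finset.mem_image.2 ⟨_, hL.2.1, by simp⟩,
      Finset.mem_image.2 ⟨_, hL.2.2, by simp⟩⟩
  · intro L _
    show Finset.image _ (Finset.image _ L) = L
    rw [img_img, mul_inv_cancel, img_one]
  · intro L _
    show Finset.image _ (Finset.image _ L) = L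
    rw [img_img, inv_mul_cancel, img_one]

lemma lam_comm (x y : G) : lam F x y = lam F y x := by
  unfold lam; congr 1; ext L; simp only [Finset.mem_filter]; tauto

lemma lam_eq (h : PGF F s t α) (x y : G) : lam F x y = lam F 1 (y⁻¹ * x) := by
  rw [lam_comm, ← lam_tr h y⁻¹ y x, inv_mul_cancel]

lemma sum_lam (S : Finset G) (x : G) :
    ∑ y ∈ S, lam F x y = ∑ M ∈ F.filter (fun M => x ∈ M), (S ∩ M).card := by
  simp only [lam, Finset.card_eq_sum_ones, Finset.sum_filter, ← Finset.filter_mem_eq_inter]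
  rw [Finset.sum_comm]
  refine Finset.sum_congr rfl fun M _ => ?_
  by_cases hx : x ∈ M <;> simp [hx]

lemma line_sum (h : PGF F s t α) (L : Finset G) (hL : L ∈ F) (x : G) :
    ∑ y ∈ L, lam F x y = if x ∈ L then s + t + 1 else α := by
  rw [sum_lam]
  split_ifs with hx
  · rw [← Finset.add_sum_erase _ _ (Finset.mem_filter.2 ⟨hL, hx⟩), Finset.inter_self, h.card L hL]
    have : ∀ M ∈ (F.filter (fun M => x ∈ M)).erase L, (L ∩ M).card = 1 := by
      intro M hM
      obtain ⟨hne, hM⟩ := Finset.mem_erase.1 hM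
      obtain ⟨hMF, hxM⟩ := Finset.mem_filter.1 hM
      refine le_antisymm (h.inter L hL M hMF (Ne.symm hne)) ?_
      exact Finset.card_pos.2 ⟨x, Finset.mem_inter.2 ⟨hx, hxM⟩⟩
    rw [Finset.sum_congr rfl this, Finset.sum_const,
      Finset.card_erase_of_mem (Finset.mem_filter.2 ⟨hL, hx⟩), h.deg]
    simp; omega
  · rw [← h.al x L hL hx, Finset.card_eq_sum_ones, Finset.sum_filter, Finset.sum_filter]
    refine Finset.sum_congr rfl fun M hM => ?_
    by_cases hxM : x ∈ M
    · have hne : L ≠ M := by rintro rfl; exact hx hxM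
      have h1 := h.inter L hL M hM hne
      by_cases hy : ∃ y ∈ L, y ∈ M
      · obtain ⟨y, hy1, hy2⟩ := id hy
        have h2 : 0 < (L ∩ M).card := Finset.card_pos.2 ⟨y, Finset.mem_inter.2 ⟨hy1, hy2⟩⟩
        rw [if_pos hxM, if_pos ⟨hxM, hy⟩]; omega
      · rw [if_pos hxM, if_neg (fun h => hy h.2), Finset.card_eq_zero,
          Finset.eq_empty_iff_forall_notMem]
        intro y hy'
        exact hy ⟨y, Finset.mem_inter.1 hy'⟩
    · rw [if_neg hxM, if_neg (fun h => hxM h.1)]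

lemma total_lam (h : PGF F s t α) (x : G) : ∑ y, lam F x y = (s + 1) * (t + 1) := by
  rw [sum_lam]
  simp only [Finset.univ_inter]
  rw [Finset.sum_congr rfl (fun M hM => h.card M (Finset.mem_filter.1 hM).1), Finset.sum_const,
    h.deg, smul_eq_mul, mul_comm]

lemma exists_line (h : PGF F s t α) : ∃ L ∈ F, (1 : G) ∈ L := by
  have h1 : 0 < (F.filter fun L => (1 : G) ∈ L).card := by rw [h.deg]; omega
  obtain ⟨L, hL⟩ := Finset.card_pos.1 h1
  exact ⟨L, (Finset.mem_filter.1 hL).1, (Finset.mem_filter.1 hL).2⟩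

lemma card_eq (h : PGF F s t α) (hαs : α < s) :
    α * Fintype.card G = (s + 1) * (s * t + α) := by
  obtain ⟨L, hL, -⟩ := exists_line h
  have h1 : ∑ x, ∑ y ∈ L, lam F x y = (s + 1) * ((s + 1) * (t + 1)) := by
    rw [Finset.sum_comm]
    have hy : ∀ y ∈ L, ∑ x, lam F x y = (s + 1) * (t + 1) := fun y _ => by
      rw [Finset.sum_congr rfl (fun x _ => lam_comm (F := F) x y), total_lam h]
    rw [Finset.sum_congr rfl hy, Finset.sum_const, h.card L hL, smul_eq_mul]
  simp only [line_sum h L hL] at h1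
  have h2 : ∀ x : G, (if x ∈ L then s + t + 1 else α) =
      α + if x ∈ L then s + t + 1 - α else 0 := by
    intro x; split_ifs <;> omega
  simp only [h2] at h1
  rw [Finset.sum_add_distrib, Finset.sum_const, ← Finset.sum_filter, Finset.sum_const,
    Finset.filter_mem_eq_inter, Finset.univ_inter, h.card L hL, Finset.card_univ,
    smul_eq_mul, smul_eq_mul] at h1
  obtain ⟨d, hd⟩ : ∃ d, s + t + 1 = α + d := ⟨s + t + 1 - α, by omega⟩
  have hd' : s + t + 1 - α = d := by omega
  rw [hd'] at h1
  zify at h1 hd ⊢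
  have : (d : ℤ) = s + t + 1 - α := by linarith
  rw [this] at h1
  linarith

lemma dvd_of_rigid (h : PGF F s t α) (hr : ∀ g : G, ∀ L ∈ F, L.image (fun y => g * y) = L → g = 1) :
    s + 1 ∣ t + 1 := by
  rw [← h.deg 1]
  refine dvd_card_of_classes _
    (fun L : Finset G => L.image fun l => L.image fun y => l⁻¹ * y) (s + 1) ?_ ?_ ?_ ?_
  · intro L hL
    exact Finset.mem_image.2 ⟨1, (Finset.mem_filter.1 hL).2, by rw [inv_one, img_one]⟩
  · intro L hL M hM
    obtain ⟨l, hl, rfl⟩ := Finset.mem_image.1 hM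
    exact Finset.mem_filter.2 ⟨h.tr _ _ (Finset.mem_filter.1 hL).1,
      Finset.mem_image.2 ⟨l, hl, by simp⟩⟩
  · intro L hL M hM
    obtain ⟨l, hl, rfl⟩ := Finset.mem_image.1 hM
    show Finset.image _ (Finset.image _ L) = Finset.image _ L
    rw [Finset.image_image]
    refine Finset.image_congr fun k _ => ?_
    show Finset.image _ (Finset.image _ L) = _
    rw [img_img]; simp
  · intro L hL
    have hLF := (Finset.mem_filter.1 hL).1
    rw [Finset.card_image_of_injOn, h.card L hLF]
    intro l _ m _ hlm
    have h1 := congrArg (Finset.image (fun y => m * y)) (show Finset.image (fun y => l⁻¹ * y) L =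
      Finset.image (fun y => m⁻¹ * y) L from hlm)
    rw [img_img, img_img, mul_inv_cancel, img_one] at h1
    exact (mul_inv_eq_one.1 (hr _ L hLF h1)).symm

lemma hat_mul (h : PGF F s t α) (hαs : α < s) (χ : AddChar (Additive G) ℂ) (hχ : χ ≠ 0)
    (L : Finset G) (hL : L ∈ F) (r : Additive G → ℕ) (hr : r = fun a => lam F 1 a.toMul) :
    (∑ y ∈ L, χ (Additive.ofMul y)) * hat r χ =
      (∑ y ∈ L, χ (Additive.ofMul y)) * ((s + t + 1 - α : ℕ) : ℂ) := by
  have h1 : ∑ x : G, χ (Additive.ofMul x) * ((∑ y ∈ L, lam F x y : ℕ) : ℂ) =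
      (∑ y ∈ L, χ (Additive.ofMul y)) * hat r χ := by
    push_cast
    simp only [Finset.mul_sum]
    rw [Finset.sum_comm, Finset.sum_mul]
    refine Finset.sum_congr rfl fun y _ => ?_
    rw [hat, Finset.mul_sum]
    refine Fintype.sum_equiv ((Equiv.mulLeft y⁻¹).trans Additive.ofMul) _ _ fun x => ?_
    rw [lam_eq h x y, hr]
    simp only [Equiv.trans_apply, Equiv.coe_mulLeft, toMul_ofMul]
    have : Additive.ofMul x = Additive.ofMul y + Additive.ofMul (y⁻¹ * x) := by
      rw [← ofMul_mul]; simp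
    rw [this, AddChar.map_add_eq_mul]; ring
  rw [← h1]
  have h2 : ∀ x : G, χ (Additive.ofMul x) * ((∑ y ∈ L, lam F x y : ℕ) : ℂ) =
      χ (Additive.ofMul x) * α + if x ∈ L then χ (Additive.ofMul x) * ((s + t + 1 - α : ℕ) : ℂ)
        else 0 := by
    intro x
    rw [line_sum h L hL]
    split_ifs
    · rw [← mul_add, ← Nat.cast_add]; congr 2; omega
    · simp
  simp only [h2]
  rw [Finset.sum_add_distrib, ← Finset.sum_mul, ← Finset.sum_filter,
    Finset.filter_mem_eq_inter, Finset.univ_inter, ← Finset.sum_mul]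
  have h3 : ∑ x : G, χ (Additive.ofMul x) = 0 := by
    rw [← AddChar.sum_eq_zero_iff_ne_zero.2 hχ]
    exact Fintype.sum_equiv Additive.ofMul _ _ fun _ => rfl
  rw [h3]; ring

lemma hat_lines (χ : AddChar (Additive G) ℂ)
    (r : Additive G → ℕ) (hr : r = fun a => lam F 1 a.toMul) :
    hat r χ = ∑ M ∈ F.filter (fun M => (1 : G) ∈ M), ∑ y ∈ M, χ (Additive.ofMul y) := by
  have h1 : hat r χ = ∑ y : G, (lam F 1 y : ℂ) * χ (Additive.ofMul y) := by
    rw [hat, hr]; exact Fintype.sum_equiv Additive.toMul _ _ fun _ => rfl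
  have h2 : ∀ y : G, (lam F 1 y : ℂ) * χ (Additive.ofMul y) =
      ∑ M ∈ F.filter (fun M => (1 : G) ∈ M), if y ∈ M then χ (Additive.ofMul y) else 0 := by
    intro y
    rw [← Finset.sum_filter, Finset.sum_const, Finset.filter_filter, nsmul_eq_mul, lam]
  rw [h1]
  simp only [h2]
  rw [Finset.sum_comm]
  refine Finset.sum_congr rfl fun M _ => ?_
  rw [← Finset.sum_filter, Finset.filter_mem_eq_inter, Finset.univ_inter]

lemma spec_of_pg (h : PGF F s t α) (hαs : α < s) :
    Spec (fun a : Additive G => lam F 1 a.toMul) (s + 1) (t + 1) (s + t + 1 - α) where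
  zero := by
    show lam F 1 1 = t + 1
    rw [← h.deg 1, lam]; simp
  le_one := by
    intro a ha
    have ha' : a.toMul ≠ 1 := ha
    show lam F 1 a.toMul ≤ 1
    rw [lam, Finset.card_le_one]
    intro L hL M hM
    by_contra hne
    simp only [Finset.mem_filter] at hL hM
    have h1 := h.inter L hL.1 M hM.1 hne
    rw [Finset.card_le_one] at h1
    exact ha' (h1 _ (Finset.mem_inter.2 ⟨hL.2.2, hM.2.2⟩) _ (Finset.mem_inter.2 ⟨hL.2.1, hM.2.1⟩))
  total := by
    rw [← total_lam h 1]
    exact Fintype.sum_equiv Additive.toMul _ _ fun _ => rfl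
  pos := by omega
  two := by
    intro χ hχ
    by_cases h0 : ∃ L ∈ F, ∑ y ∈ L, χ (Additive.ofMul y) ≠ 0
    · obtain ⟨L, hL, h0⟩ := h0
      exact Or.inr (mul_left_cancel₀ h0 (hat_mul h hαs χ hχ L hL _ rfl))
    · push Not at h0
      left
      rw [hat_lines χ _ rfl]
      exact Finset.sum_eq_zero fun M hM => h0 M (Finset.mem_filter.1 hM).1
  nd := by
    intro p b χ hp hpx hχ hb
    obtain ⟨L, hL, -⟩ := exists_line h
    refine mul_left_cancel₀ ?_ (hat_mul h hαs χ hχ L hL _ rfl)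
    intro h0
    apply hpx
    rw [← h.card L hL]
    have h1 := dvd_card_of_sum_zero χ p b hp hb (L.map Additive.ofMul.toEmbedding)
      (by rw [Finset.sum_map]; exact h0)
    rwa [Finset.card_map] at h1

lemma exists_r_zero (h : PGF F s t α) (hαs : α < s) (hαt : α < t) :
    ∃ g : G, g ≠ 1 ∧ lam F 1 g = 0 := by
  by_contra hcon
  push Not at hcon
  have hs := spec_of_pg h hαs
  have h1 : ∀ g : G, g ≠ 1 → lam F 1 g = 1 := fun g hg =>
    le_antisymm (hs.le_one (Additive.ofMul g) hg) (Nat.one_le_iff_ne_zero.2 (hcon g hg))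
  have h2 := total_lam h 1
  rw [← Finset.add_sum_erase _ _ (Finset.mem_univ (1 : G)),
    Finset.sum_congr rfl (fun g hg => h1 g (Finset.ne_of_mem_erase hg)), Finset.sum_const,
    Finset.card_erase_of_mem (Finset.mem_univ _), Finset.card_univ,
    show lam F 1 1 = t + 1 from hs.zero] at h2
  have h3 := card_eq h hαs
  have h4 := Fintype.card_pos (α := G)
  obtain ⟨w, hw⟩ : ∃ w, Fintype.card G = w + 1 := ⟨Fintype.card G - 1, by omega⟩
  rw [hw] at h2 h3
  simp at h2
  have h5 : w = s * (t + 1) := by linarith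
  subst h5
  have h6 : α * (s * t) = (s + 1) * (s * t) := by linarith
  have h7 : 0 < s * t := Nat.mul_pos (by omega) (by omega)
  have := Nat.eq_of_mul_eq_mul_right h7 h6
  omega

lemma exists_r_one (h : PGF F s t α) (hαs : α < s) :
    ∃ g : G, g ≠ 1 ∧ lam F 1 g = 1 := by
  obtain ⟨L, hL, h1⟩ := exists_line h
  have h2 : 1 < L.card := by rw [h.card L hL]; omega
  obtain ⟨g, hg, hne⟩ := Finset.exists_mem_ne h2 1
  refine ⟨g, hne, le_antisymm ((spec_of_pg h hαs).le_one (Additive.ofMul g) hne) ?_⟩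
  exact Finset.card_pos.2 ⟨L, Finset.mem_filter.2 ⟨hL, h1, hg⟩⟩

lemma delta_dvd (h : PGF F s t α) (hαs : α < s) (hαt : α < t) :
    s + t + 1 - α ∣ (s + 1) * (t + 1) ∧ s + t + 1 - α ∣ Fintype.card G := by
  have hs := spec_of_pg h hαs
  obtain ⟨g, -, hg⟩ := exists_r_zero h hαs hαt
  obtain ⟨k, -, hk⟩ := exists_r_one h hαs
  obtain ⟨N, hN⟩ := inv_eq hs (Additive.ofMul g)
  obtain ⟨N', hN'⟩ := inv_eq hs (Additive.ofMul k)
  simp only [toMul_ofMul, hg, hk, Fintype.card_additive] at hN hN'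
  generalize s + t + 1 - α = δ at *
  have h1 : (δ : ℤ) ∣ (((s + 1) * (t + 1) : ℕ) : ℤ) := ⟨-N, by push_cast at hN ⊢; linarith⟩
  have h2 : (δ : ℤ) ∣ ((Fintype.card G : ℕ) : ℤ) := ⟨N' - N, by push_cast at hN hN' ⊢; linarith⟩
  exact ⟨Int.natCast_dvd_natCast.1 h1, Int.natCast_dvd_natCast.1 h2⟩

end PGFsec


/-! ### Soundness of the checker -/

lemma forceN_eq {β : Type} (n : ℕ) (f : ℕ → β) : forceN n f = f n := by
  cases n <;> rfl

lemma allB_spec {N : ℕ} {f : ℕ → Bool} (h : allB N f = true) : ∀ i < N, f i = true := by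
  induction N with
  | zero => intro i hi; omega
  | succ N ih =>
    have h' : (f N && allB N f) = true := h
    rw [Bool.and_eq_true] at h'
    intro i hi
    rcases Nat.lt_succ_iff_lt_or_eq.1 hi with h1 | rfl
    · exact ih h'.2 i h1
    · exact h'.1

lemma blt_iff (a b : ℕ) : Nat.blt a b = true ↔ a < b := by
  simp [Nat.blt, Nat.ble_eq]

lemma killK_sound {x T δ P Q K a : ℕ} (h : Cond x T δ P Q K a) :
    killK T Q K (δ / Nat.gcd δ P) ≠ true := by
  intro hk
  simp only [killK, forceN_eq] at hk
  have h1 : Nat.blt (Q * T) K = false := by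
    rw [Bool.eq_false_iff, ne_eq, blt_iff]; exact not_lt.2 h.le
  have h2 : Nat.beq ((Q * T - K) % (δ / Nat.gcd δ P)) 0 = true := by
    rw [Nat.beq_eq]; exact Nat.mod_eq_zero_of_dvd h.dvd
  have h3 : Nat.blt (Q * (T * T + K - T)) (K * K) = false := by
    rw [Bool.eq_false_iff, ne_eq, blt_iff]; exact not_lt.2 h.le2
  rw [h1, h2, h3] at hk
  simp only [cond_true, cond_false] at hk
  rw [blt_iff] at hk
  exact absurd hk (not_lt.2 (h.ineq _))

lemma isPr_spec {p : ℕ} (h : isPr p = true) : p.Prime := by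
  simp only [isPr, forceN_eq, Bool.and_eq_true, Nat.ble_eq] at h
  rw [Nat.prime_def_lt']
  refine ⟨h.1, fun m hm hmp hd => ?_⟩
  have h1 := allB_spec h.2 (m - 2) (by omega)
  rw [show m - 2 + 2 = m by omega, Nat.mod_eq_zero_of_dvd hd] at h1
  simp at h1

lemma ndSearch_spec {x T v δ : ℕ} : ∀ (fuel p : ℕ), ndSearch x T v δ fuel p = true →
    ∃ p', p' ∣ v ∧ Nat.gcd p' x = 1 ∧ ndTest x T v δ p' = true ∧ p'.Prime := by
  intro fuel
  induction fuel with
  | zero => intro p h; exact absurd h (by simp [ndSearch])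
  | succ k ih =>
    intro p h
    have h' : (cond (and (Nat.beq (v % p) 0) (and (Nat.beq (Nat.gcd p x) 1)
      (and (ndTest x T v δ p) (isPr p)))) true (forceN (p + 1) (ndSearch x T v δ k))) = true := h
    rw [forceN_eq] at h'
    cases hc : (and (Nat.beq (v % p) 0) (and (Nat.beq (Nat.gcd p x) 1)
      (and (ndTest x T v δ p) (isPr p)))) with
    | false => rw [hc] at h'; exact ih _ h'
    | true =>
      simp only [Bool.and_eq_true, Nat.beq_eq] at hc
      exact ⟨p, Nat.dvd_of_mod_eq_zero hc.1, hc.2.1, hc.2.2.1, isPr_spec hc.2.2.2⟩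

/-- The facts available at a leaf. -/
def Facts (x T v δ : ℕ) : Prop :=
  ∀ P, P ∣ v → ∃ K a, Cond x T δ P (v / P) K a ∧
      (∀ p b, p.Prime → P = p ^ b → ¬ p ∣ x → a = P - 1) ∧ (P = 625 → 4 ∣ a)

lemma ndTest_sound {x T v δ p : ℕ} (hf : Facts x T v δ) (hp : p.Prime)
    (hpx : Nat.gcd p x = 1) (h : ndTest x T v δ p = true) : False := by
  simp only [ndTest, forceN_eq] at h
  set q := Nat.gcd v (p ^ 40) with hq
  obtain ⟨b, -, hb⟩ := (Nat.dvd_prime_pow hp).1 (Nat.gcd_dvd_right v (p ^ 40))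
  obtain ⟨K, a, hK, ha, -⟩ := hf q (Nat.gcd_dvd_left _ _)
  have hpx' : ¬ p ∣ x := fun hd => by
    rw [Nat.gcd_eq_left hd] at hpx
    exact hp.one_lt.ne' hpx
  have ha' := ha p b hp hb hpx'
  have hq0 : 0 < q := by rw [hq, hb]; exact pow_pos hp.pos b
  have hKe : (x * T + δ * (q - 1)) / q = K := by
    rw [← ha', ← hK.eq, Nat.mul_div_cancel_left _ hq0]
  rw [hKe] at h
  exact killK_sound hK h

lemma genTest_sound {x T v δ P : ℕ} (hf : Facts x T v δ) (hδ : 0 < δ)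
    (h : genTest x T v δ P = true) : False := by
  simp only [genTest, forceN_eq, Bool.and_eq_true, Nat.beq_eq] at h
  obtain ⟨K, a, hK, -, -⟩ := hf P (Nat.dvd_of_mod_eq_zero h.1)
  have hlt := hK.lt
  have hP0 : 0 < P := by omega
  set π := δ / Nat.gcd δ P with hπ
  have hπ0 : 0 < π := Nat.div_pos (Nat.le_of_dvd hδ (Nat.gcd_dvd_left _ _))
    (Nat.gcd_pos_of_pos_left _ hδ)
  have hmod : v / P * T % π = K % π := ((Nat.modEq_iff_dvd' hK.le).2 hK.dvd).symm
  have hKle : K ≤ (x * T + δ * (P - 1)) / P := by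
    rw [Nat.le_div_iff_mul_le hP0, mul_comm, hK.eq]
    exact Nat.add_le_add_left (Nat.mul_le_mul_left _ (by omega)) _
  have h1 := allB_spec h.2 (K / π) (Nat.lt_succ_of_le (Nat.div_le_div_right hKle))
  rw [hmod, Nat.mod_add_div] at h1
  have e1 : Nat.blt (P * K) (x * T) = false := by
    rw [Bool.eq_false_iff, ne_eq, blt_iff, hK.eq]; omega
  have e2 : Nat.beq ((P * K - x * T) % δ) 0 = true := by
    rw [Nat.beq_eq, hK.eq, Nat.add_sub_cancel_left, Nat.mul_mod_right]
  have e3 : Nat.blt K T = false := by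
    rw [Bool.eq_false_iff, ne_eq, blt_iff]; exact not_lt.2 hK.ge
  rw [e1, e2, e3] at h1
  exact killK_sound hK h1

lemma leafKill_sound {x n α v δ : ℕ} (hf : Facts x (n * x) v δ) (hδ : 0 < δ)
    (h : leafKill x n α v δ = true) : (x, n, α) ∈ exceptions := by
  simp only [leafKill, forceN_eq] at h
  cases hc : (or (Nat.beq (x ^ 40 % v) 0) (and (Nat.beq α 195) (Nat.beq x 700))) with
  | false =>
    rw [hc, cond_false] at h
    obtain ⟨p, -, h2, h3, h4⟩ := ndSearch_spec _ _ h
    exact (ndTest_sound hf h4 h2 h3).elim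
  | true =>
    rw [hc] at h
    simp only [cond_true] at h
    rw [Bool.or_eq_true, List.any_eq_true, List.any_eq_true] at h
    rcases h with ⟨z, hz, h⟩ | ⟨z, hz, h⟩
    · simp only [Bool.and_eq_true, Nat.beq_eq] at h
      obtain ⟨rfl, rfl, rfl⟩ := h
      exact hz
    · simp only [Bool.and_eq_true] at h
      exact (genTest_sound hf hδ h.2.2).elim

lemma leaf_sound {x n α v δ : ℕ} (hα : 0 < α)
    (hv : α * v = x * ((x - 1) * (n * x - 1) + α)) (hδe : δ = (n + 1) * x - (α + 1))
    (hdv : δ ∣ v) (hf : Facts x (n * x) v δ) (hδ : 0 < δ)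
    (h : leaf x n α = true) : (x, n, α) ∈ exceptions := by
  simp only [leaf, forceN_eq] at h
  rw [← hv, ← hδe, Nat.mul_div_cancel_left _ hα] at h
  have e1 : Nat.beq (α * v % α) 0 = true := by rw [Nat.beq_eq, Nat.mul_mod_right]
  have e2 : Nat.beq (v % δ) 0 = true := by rw [Nat.beq_eq, Nat.mod_eq_zero_of_dvd hdv]
  rw [e1, e2] at h
  exact leafKill_sound hf hδ h

/-- The case `(1869, 1869, 714)`. -/
lemma exceptional_case (hf : Facts 1870 1870 9150625 3025) : False := by
  obtain ⟨K, a, hK, -, ha⟩ := hf 625 (by norm_num)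
  have ha := ha rfl
  have hk := killK_sound hK
  have h1 := hK.eq
  have h2 := hK.lt
  have h3 := hK.dvd
  have h4 := hK.le
  have hg : 3025 / Nat.gcd 3025 625 = 121 := by norm_num
  rw [hg] at h3 hk
  norm_num at h3 h4 hk
  obtain ⟨m, hm⟩ := h3
  obtain ⟨j, rfl⟩ := ha
  have hc : ∃ c, 48 ≤ 4 * c ∧ 4 * c ≤ 68 ∧ K = 121 * (4 * c) := by
    refine ⟨K / 484, ?_, ?_, ?_⟩ <;> omega
  obtain ⟨c, hc1, hc2, rfl⟩ := hc
  have hc3 : 12 ≤ c := by omega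
  have hc4 : c ≤ 17 := by omega
  revert hk
  rw [imp_false]
  clear * - hc3 hc4
  interval_cases c <;> decide +kernel

lemma slice_spec {β c y b a : ℕ} (hβ : 0 < β) (hc : 0 < c) (hy : 0 < y) (hb : 0 < b) (ha : 0 < a)
    (hle : β * (a * (b * (β + c * y) + c)) ≤ 1001) (h : slice β = true) :
    leaf (a * (b * (β + c * y) + c) * (β + c * y)) (b * y)
      (β * (a * (b * (β + c * y) + c)) - 1) = true := by
  simp only [slice, forceN_eq] at h
  have hz : b * (β + c * y) + c ≤ 1001 / β := by
    rw [Nat.le_div_iff_mul_le hβ]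
    refine le_trans ?_ hle
    rw [mul_comm]
    exact Nat.mul_le_mul_left _ (Nat.le_mul_of_pos_left _ ha)
  have hx' : β + c * y ≤ b * (β + c * y) := Nat.le_mul_of_pos_left _ hb
  have h1 := allB_spec h (c - 1) (by omega)
  rw [Nat.sub_add_cancel hc] at h1
  have h2 := allB_spec h1 (y - 1) (by
    have : y + 1 ≤ (1001 / β - β) / c := by
      rw [Nat.le_div_iff_mul_le hc]
      have : (y + 1) * c = c * y + c := by ring
      omega
    omega)
  rw [Nat.sub_add_cancel hy] at h2
  have h3 := allB_spec h2 (b - 1) (by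
    have : b ≤ (1001 / β - c) / (β + c * y) := by
      rw [Nat.le_div_iff_mul_le (by omega)]; omega
    omega)
  rw [Nat.sub_add_cancel hb] at h3
  have h4 := allB_spec h3 (a - 1) (by
    have : a ≤ 1001 / (β * (b * (β + c * y) + c)) := by
      rw [Nat.le_div_iff_mul_le (by positivity)]
      refine le_trans (le_of_eq ?_) hle
      ring
    omega)
  rw [Nat.sub_add_cancel ha] at h4
  exact h4

/-! ### Arithmetic reduction -/

lemma param {x n α : ℕ} (hn : 0 < n) (hx : α + 1 < x)
    (hdvd : (n + 1) * x - (α + 1) ∣ x * (n * x)) :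
    ∃ β c y b a : ℕ, 0 < β ∧ 0 < c ∧ 0 < y ∧ 0 < b ∧ 0 < a ∧
      x = a * (b * (β + c * y) + c) * (β + c * y) ∧ n = b * y ∧
      α + 1 = β * (a * (b * (β + c * y) + c)) := by
  have hg0 : 0 < Nat.gcd x (α + 1) := Nat.gcd_pos_of_pos_right _ (by omega)
  obtain ⟨x', β, hco, hx', hβ⟩ := Nat.exists_coprime x (α + 1)
  set d := Nat.gcd x (α + 1) with hd
  clear_value d
  have hβ0 : 0 < β := Nat.pos_of_ne_zero (by rintro rfl; omega)
  have hlt : β < x' := by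
    rw [hx', hβ] at hx; exact Nat.lt_of_mul_lt_mul_right hx
  obtain ⟨w, rfl⟩ : ∃ w, x' = β + w := ⟨x' - β, by omega⟩
  have hw : 0 < w := by omega
  set x' := β + w with hxw
  set e := n * x' + w with he
  have hδ : (n + 1) * x - (α + 1) = d * e := by
    rw [hx', hβ, he]
    apply Nat.sub_eq_of_eq_add
    rw [hxw]; ring
  rw [hδ, hx'] at hdvd
  have h1 : e ∣ n * d * (x' * x') := by
    apply Nat.dvd_of_mul_dvd_mul_left hg0
    convert hdvd using 1; ring
  have hcoe : Nat.Coprime e x' := by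
    rw [he, Nat.add_comm, Nat.coprime_add_mul_right_left]
    rw [hxw] at hco ⊢
    rw [Nat.coprime_add_self_right]; simpa [Nat.coprime_comm] using hco
  have h2 : e ∣ n * d := (hcoe.mul_right hcoe).dvd_of_dvd_mul_right h1
  obtain ⟨f, hf⟩ := h2
  have hd0 : 0 < d := hg0
  have hf0 : 0 < f := Nat.pos_of_ne_zero (by
    rintro rfl
    have := Nat.mul_pos hn hd0
    omega)
  have h3 : f * x' < d := by
    apply Nat.lt_of_mul_lt_mul_left (a := n)
    rw [hf, he]
    have := Nat.mul_pos hf0 hw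
    nlinarith
  obtain ⟨h, rfl⟩ : ∃ h, d = f * x' + h := ⟨d - f * x', by omega⟩
  have hh : 0 < h := by omega
  have h4 : n * h = f * w := by
    rw [he] at hf; nlinarith
  have ha0 : 0 < Nat.gcd f h := Nat.gcd_pos_of_pos_left _ hf0
  obtain ⟨b, c, hbc, hfb, hhc⟩ := Nat.exists_coprime f h
  generalize Nat.gcd f h = a at *
  have hb0 : 0 < b := Nat.pos_of_ne_zero (by rintro rfl; omega)
  have hc0 : 0 < c := Nat.pos_of_ne_zero (by rintro rfl; omega)
  have h5 : n * c = b * w := by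
    apply Nat.eq_of_mul_eq_mul_right ha0
    rw [hfb, hhc] at h4
    linarith
  obtain ⟨y, hy⟩ : c ∣ w := hbc.symm.dvd_of_dvd_mul_left ⟨n, by rw [← h5]; ring⟩
  have hy0 : 0 < y := Nat.pos_of_ne_zero (by rintro rfl; omega)
  have hny : n = b * y := by
    apply Nat.eq_of_mul_eq_mul_right hc0
    rw [h5, hy]; ring
  have hdd : f * x' + h = a * (b * (β + c * y) + c) := by
    rw [hfb, hhc, hxw, hy]; ring
  refine ⟨β, c, y, b, a, hβ0, hc0, hy0, hb0, ha0, ?_, hny, ?_⟩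
  · rw [← hdd, hx', ← hy, ← hxw]; ring
  · rw [← hdd, hβ]

lemma slice_one : slice 1 = true := by decide +kernel
lemma slice_two : slice 2 = true := by decide +kernel
lemma slice_three : slice 3 = true := by decide +kernel
lemma slice_rest : (allB 28 fun i => forceN (i + 4) slice) = true := by decide +kernel

lemma slice_all {β : ℕ} (h0 : 0 < β) (h : β < 32) : slice β = true := by
  rcases lt_or_ge β 4 with h4 | h4
  · interval_cases β
    · exact slice_one
    · exact slice_two
    · exact slice_three
  · have h1 := allB_spec slice_rest (β - 4) (by omega)
    rwa [forceN_eq, Nat.sub_add_cancel h4] at h1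

lemma pgf_of_pg {G : Type*} [CommGroup G] [Fintype G] [DecidableEq G] {𝓛 : Set (Finset G)}
    {s t α : ℕ} (h : IsPGSinger G 𝓛 s t α) (F : Finset (Finset G)) (hF : ∀ L, L ∈ F ↔ L ∈ 𝓛) :
    PGF F s t α where
  card L hL := h.line_card L ((hF L).1 hL)
  deg x := by
    rw [← h.point_deg x, ← Set.ncard_coe_finset]
    congr 1; ext L; simp [hF]
  inter L hL M hM hne := by
    have h1 := h.line_inter L ((hF L).1 hL) M ((hF M).1 hM) hne
    rwa [← Finset.coe_inter, Set.ncard_coe_finset] at h1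
  al x L hL hx := by
    rw [← h.alpha_ax x L ((hF L).1 hL) hx, ← Set.ncard_coe_finset]
    congr 1; ext M; simp [hF]
  tr g L hL := (hF _).2 (h.translate g L ((hF L).1 hL))

/-- a proper `pg(s,t,α)` of rigid type with abelian Singer group and
`α ≤ 1000` must have parameters `(5,5,2)`, `(11,23,3)`, `(39,39,15)`, `(272,272,104)` or
`(2295,4591,615)`. -/
theorem rigid_type_classification_alpha_le_1000
    (G : Type*) [CommGroup G] [Fintype G] [DecidableEq G]
    (s t α : ℕ) (hα2 : 2 ≤ α) (hα1000 : α ≤ 1000) (hαs : α < s) (hαt : α < t)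
    (𝓛 : Set (Finset G)) (hpg : IsPGSinger G 𝓛 s t α) (hrig : RigidType G 𝓛) :
    (s, t, α) = (5, 5, 2) ∨ (s, t, α) = (11, 23, 3) ∨ (s, t, α) = (39, 39, 15) ∨
      (s, t, α) = (272, 272, 104) ∨ (s, t, α) = (2295, 4591, 615) := by
  classical
  set F := 𝓛.toFinite.toFinset with hFd
  have hF : ∀ L, L ∈ F ↔ L ∈ 𝓛 := fun L => by simp [hFd]
  have h := pgf_of_pg hpg F hF
  obtain ⟨n, hn⟩ := dvd_of_rigid h (fun g L hL => hrig g L ((hF L).1 hL))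
  have hcard := card_eq h hαs
  have hspec := spec_of_pg h hαs
  obtain ⟨hd1, hd2⟩ := delta_dvd h hαs hαt
  have hn0 : 0 < n := Nat.pos_of_ne_zero (by rintro rfl; omega)
  have hT : t + 1 = n * (s + 1) := by rw [hn, mul_comm]
  have ht : t = n * (s + 1) - 1 := by omega
  have hδ : s + t + 1 - α = (n + 1) * (s + 1) - (α + 1) := by
    have : (n + 1) * (s + 1) = n * (s + 1) + (s + 1) := by ring
    omega
  have hf : Facts (s + 1) (n * (s + 1)) (Fintype.card G) (s + t + 1 - α) := by
    intro P hP
    have := spec_facts hspec P (by simpa using hP)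
    rwa [hT, Fintype.card_additive] at this
  have hex : (s + 1, n, α) ∈ exceptions := by
    have hd1' := hd1
    rw [hδ, hT] at hd1'
    obtain ⟨β, c, y, b, a, hβ, hc, hy, hb, ha, hx, hny, hα⟩ := param hn0 (by omega) hd1'
    have hle : β * (a * (b * (β + c * y) + c)) ≤ 1001 := by omega
    have hβ32 : β < 32 := by
      by_contra hcon
      push Not at hcon
      have h1 : β ≤ a * (b * (β + c * y) + c) := by
        have e1 : b * (β + c * y) + c ≤ a * (b * (β + c * y) + c) := Nat.le_mul_of_pos_left _ ha
        have e2 : β + c * y ≤ b * (β + c * y) := Nat.le_mul_of_pos_left _ hb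
        omega
      have h2 := Nat.mul_le_mul hcon (hcon.trans h1)
      omega
    have hl := slice_spec hβ hc hy hb ha hle (slice_all hβ hβ32)
    rw [← hx, ← hny, ← hα, Nat.add_sub_cancel] at hl
    refine leaf_sound (by omega) ?_ hδ hd2 hf hspec.pos hl
    rw [hcard, ← ht, Nat.add_sub_cancel]
  simp only [exceptions, List.mem_cons, Prod.mk.injEq, List.not_mem_nil, or_false] at hex
  rcases hex with ⟨h1, rfl, rfl⟩ | ⟨h1, rfl, rfl⟩ | ⟨h1, rfl, rfl⟩ | ⟨h1, rfl, rfl⟩ |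
    ⟨h1, rfl, rfl⟩ | ⟨h1, rfl, rfl⟩
  · left; simp only [Prod.mk.injEq, and_true]; omega
  · right; left; simp only [Prod.mk.injEq, and_true]; omega
  · right; right; left; simp only [Prod.mk.injEq, and_true]; omega
  · right; right; right; left; simp only [Prod.mk.injEq, and_true]; omega
  · right; right; right; right; simp only [Prod.mk.injEq, and_true]; omega
  · exfalso
    have hs : s = 1869 := by omega
    subst hs
    have ht' : t = 1869 := by omega
    subst ht'
    have hv : Fintype.card G = 9150625 := by omega
    rw [hv] at hf
    exact exceptional_case hf
end
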